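/- arXiv:2303.05337 — 5 statements merged into one kernel-verified Lean document; each statement's English description precedes it below -/
import Mathlib

section
/- Let γ ∈ [0,+∞), let φ ∈ Γ₀(ℝ) be even with 0 in the interior of dom φ, set Φ = φ ∘ ‖·‖ on H, and let x ∈ H. Then Φ ∈ Γ₀(H) and prox_{γ⊙Φ} x = (prox_{γ⊙φ}‖x‖ / ‖x‖) · x if x ≠ 0, and prox_{γ⊙Φ} x = 0 if x = 0. -/
open scoped Classical

noncomputable section

/-- Effective domain of an extended-real-valued function. -/
def edom {E : Type*} (f : E → EReal) : Set E := {x | f x < ⊤}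

/-- Convexity of an extended-real-valued function, via its epigraph. -/
def ConvexEpi {E : Type*} [AddCommGroup E] [Module ℝ E] (f : E → EReal) : Prop :=
  Convex ℝ {p : E × ℝ | f p.1 ≤ (p.2 : EReal)}

/-- `f ∈ Γ₀(E)`: proper, lower semicontinuous, convex, with values in `(-∞, +∞]`. -/
def IsGamma0 {E : Type*} [AddCommGroup E] [Module ℝ E] [TopologicalSpace E]
    (f : E → EReal) : Prop :=
  (∃ x, f x ≠ ⊤) ∧ (∀ x, f x ≠ ⊥) ∧ LowerSemicontinuous f ∧ ConvexEpi f

/-- Proximity operator: the (unique, for `f ∈ Γ₀`) minimizer of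
`y ↦ f y + ‖x - y‖² / 2`. -/
def prox {E : Type*} [NormedAddCommGroup E] [InnerProductSpace ℝ E]
    (f : E → EReal) (x : E) : E :=
  Classical.epsilon fun p =>
    ∀ y, f p + ((‖x - p‖ ^ 2 / 2 : ℝ) : EReal) ≤ f y + ((‖x - y‖ ^ 2 / 2 : ℝ) : EReal)

/-- Metric projection onto a set. -/
def projC {E : Type*} [NormedAddCommGroup E] (C : Set E) (x : E) : E :=
  Classical.epsilon fun p => p ∈ C ∧ ∀ y ∈ C, ‖x - p‖ ≤ ‖x - y‖

/-- Fenchel conjugate. -/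
def fconj {E : Type*} [NormedAddCommGroup E] [InnerProductSpace ℝ E]
    (f : E → EReal) (y : E) : EReal :=
  ⨆ x, ((inner ℝ x y : ℝ) : EReal) - f x

/-- Plain scalar multiple `ξ·f`. -/
def smulE {E : Type*} (ξ : ℝ) (f : E → EReal) : E → EReal := fun x => (ξ : EReal) * f x

/-- The operation `ξ ⊙ f`: indicator of `cl (dom f)` if `ξ = 0`, and `ξ·f` if `ξ > 0`. -/
def rscale {E : Type*} [TopologicalSpace E] (ξ : ℝ) (f : E → EReal) : E → EReal :=
  if ξ = 0 then fun x => if x ∈ closure (edom f) then (0 : EReal) else ⊤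
  else fun x => (ξ : EReal) * f x

/-- `f^∨`: agrees with `f` where `-∞ < f < 0`, and is `+∞` elsewhere. -/
def pbas {E : Type*} (f : E → EReal) : E → EReal :=
  fun x => if ⊥ < f x ∧ f x < 0 then f x else ⊤

/-- `f^∧`: agrees with `f` where `0 < f < +∞`, and is `+∞` elsewhere. -/
def phaut {E : Type*} (f : E → EReal) : E → EReal :=
  fun x => if 0 < f x ∧ f x < ⊤ then f x else ⊤

/-- `f_▽ = (f^∨)**`. -/
def basEnv {E : Type*} [NormedAddCommGroup E] [InnerProductSpace ℝ E]
    (f : E → EReal) : E → EReal :=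
  fconj (fconj (pbas f))

/-- `f_▲ = (f^∧)**`. -/
def hautEnv {E : Type*} [NormedAddCommGroup E] [InnerProductSpace ℝ E]
    (f : E → EReal) : E → EReal :=
  fconj (fconj (phaut f))

/-- `S = s⁻¹((0, +∞))`. -/
def sdom {G : Type*} (s : G → EReal) : Set G := {v | 0 < s v ∧ s v < ⊤}

/-- The preperspective `φ ⋉ s`, on the Hilbert direct sum `H ⊕ G`. -/
def prePersp {H G : Type*} [NormedAddCommGroup H] [InnerProductSpace ℝ H]
    [NormedAddCommGroup G] [InnerProductSpace ℝ G]
    (φ : H → EReal) (s : G → EReal) : WithLp 2 (H × G) → EReal := fun q =>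
  if 0 < s ((WithLp.equiv 2 (H × G)) q).2 ∧ s ((WithLp.equiv 2 (H × G)) q).2 < ⊤ then
    s ((WithLp.equiv 2 (H × G)) q).2 *
      φ ((s ((WithLp.equiv 2 (H × G)) q).2).toReal⁻¹ • ((WithLp.equiv 2 (H × G)) q).1)
  else ⊤

/-- The perspective `φ ▷ s`: the largest lower semicontinuous convex minorant of the
preperspective `φ ⋉ s`, on the Hilbert direct sum `H ⊕ G`. -/
def persp {H G : Type*} [NormedAddCommGroup H] [InnerProductSpace ℝ H]
    [NormedAddCommGroup G] [InnerProductSpace ℝ G]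
    (φ : H → EReal) (s : G → EReal) : WithLp 2 (H × G) → EReal := fun q =>
  sSup {t : EReal | ∃ g : WithLp 2 (H × G) → EReal,
    LowerSemicontinuous g ∧ ConvexEpi g ∧ (∀ r, g r ≤ prePersp φ s r) ∧ t = g q}

/-- The point `(x, y)` in the Hilbert direct sum `H ⊕ G`. -/
def pairHG {H G : Type*} (x : H) (y : G) : WithLp 2 (H × G) :=
  (WithLp.equiv 2 (H × G)).symm (x, y)

end

theorem aux_mono (φ : ℝ → EReal) (hb : ∀ x, φ x ≠ ⊥) (hc : ConvexEpi φ)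
    (heven : ∀ t : ℝ, φ (-t) = φ t) {s t : ℝ} (hs : 0 ≤ s) (hst : s ≤ t) : φ s ≤ φ t := by
  by_cases ht : φ t = ⊤
  · rw [ht]; exact le_top
  rcases eq_or_lt_of_le (hs.trans hst) with h | h
  · have : s = t := by linarith
    rw [this]
  have hr : φ t = ((φ t).toReal : EReal) := (EReal.coe_toReal ht (hb t)).symm
  have h1 : ((t, (φ t).toReal) : ℝ × ℝ) ∈ {p : ℝ × ℝ | φ p.1 ≤ (p.2 : EReal)} := hr.le
  have h2 : ((-t, (φ t).toReal) : ℝ × ℝ) ∈ {p : ℝ × ℝ | φ p.1 ≤ (p.2 : EReal)} := by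
    show φ (-t) ≤ _
    rw [heven]; exact hr.le
  have := hc h1 h2 (a := (1 + s / t) / 2) (b := (1 - s / t) / 2) (by positivity)
    (by have := (div_le_one h).2 hst; linarith) (by ring)
  simp only [Set.mem_ofPred_eq, Prod.smul_mk, Prod.mk_add_mk, smul_eq_mul] at this
  rw [hr]
  convert this using 2
  · field_simp; ring
  · norm_cast; ring

theorem aux_gamma {H : Type*} [NormedAddCommGroup H] [InnerProductSpace ℝ H]
    (φ : ℝ → EReal) (hφ : IsGamma0 φ)
    (heven : ∀ t : ℝ, φ (-t) = φ t) (h0 : φ 0 ≠ ⊤) : IsGamma0 (fun z : H => φ ‖z‖) := by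
  obtain ⟨_, hb, hl, hc⟩ := hφ
  refine ⟨⟨0, by simpa using h0⟩, fun x => hb _, hl.comp continuous_norm, ?_⟩
  rintro ⟨z, r⟩ h1 ⟨w, r'⟩ h2 a b ha hb' hab
  have := hc (x := (‖z‖, r)) h1 (y := (‖w‖, r')) h2 ha hb' hab
  refine le_trans (aux_mono φ hb hc heven (norm_nonneg _) ?_) this
  refine (norm_add_le _ _).trans ?_
  simp [norm_smul, abs_of_nonneg ha, abs_of_nonneg hb']

theorem aux_rscale (γ : ℝ) (hγ : 0 ≤ γ) (φ : ℝ → EReal) (hφ : IsGamma0 φ) (h0 : φ 0 ≠ ⊤) :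
    IsGamma0 (rscale γ φ) ∧ rscale γ φ 0 ≠ ⊤ := by
  obtain ⟨_, hb, hl, hc⟩ := hφ
  rcases eq_or_lt_of_le hγ with h | h
  · subst h
    have hcd : Convex ℝ (edom φ) := by
      intro x hx y hy a b ha hb' hab
      have := hc (x := (x, (φ x).toReal)) (EReal.coe_toReal (ne_of_lt hx) (hb x)).symm.le
        (y := (y, (φ y).toReal)) (EReal.coe_toReal (ne_of_lt hy) (hb y)).symm.le ha hb' hab
      exact lt_of_le_of_lt this (EReal.coe_lt_top _)
    have hcc := hcd.closure
    have e : rscale 0 φ = fun x => if x ∈ closure (edom φ) then (0 : EReal) else ⊤ := by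
      simp [rscale]
    have hz : (0 : ℝ) ∈ closure (edom φ) := subset_closure (lt_top_iff_ne_top.2 h0)
    have key : ∀ (x : ℝ) (r : ℝ), rscale 0 φ x ≤ (r : EReal) ↔ x ∈ closure (edom φ) ∧ 0 ≤ r := by
      intro x r
      rw [e]
      by_cases hx : x ∈ closure (edom φ) <;> simp [hx]
    have hz' : rscale 0 φ 0 ≠ ⊤ := by rw [e]; simp [hz]
    refine ⟨⟨⟨0, hz'⟩, ?_, ?_, ?_⟩, hz'⟩
    · intro x
      rw [e]
      by_cases hx : x ∈ closure (edom φ) <;> simp [hx]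
    · rw [lowerSemicontinuous_iff_isClosed_preimage]
      intro y
      by_cases hy : y = ⊤
      · subst hy; simp
      by_cases hy0 : 0 ≤ y
      · convert isClosed_closure (s := edom φ) using 1
        ext x
        rw [e]
        by_cases hx : x ∈ closure (edom φ) <;> simp [hx, hy0, hy]
      · convert isClosed_empty using 1
        ext x
        rw [e]
        by_cases hx : x ∈ closure (edom φ) <;> simp [hx, hy] <;> simpa using hy0
    · rintro ⟨z, r⟩ h1 ⟨w, r'⟩ h2 a b ha hb' hab
      simp only [Set.mem_ofPred_eq, key] at h1 h2
      simp only [Set.mem_ofPred_eq, key]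
      refine ⟨hcc h1.1 h2.1 ha hb' hab, ?_⟩
      simp only [Prod.smul_mk, Prod.mk_add_mk, smul_eq_mul]
      have := h1.2
      have := h2.2
      positivity
  · have e : rscale γ φ = fun x => (γ : EReal) * φ x := by
      simp [rscale, h.ne']
    have hg : (0 : EReal) < γ := by exact_mod_cast h
    have key : ∀ x (y : EReal), rscale γ φ x ≤ y ↔ φ x ≤ y / γ := by
      intro x y
      rw [e, EReal.le_div_iff_mul_le hg (EReal.coe_ne_top _), mul_comm]
    have hz' : rscale γ φ 0 ≠ ⊤ := by
      rw [e]
      show (γ : EReal) * φ 0 ≠ ⊤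
      rw [← EReal.coe_toReal h0 (hb 0), ← EReal.coe_mul]
      exact EReal.coe_ne_top _
    refine ⟨⟨⟨0, hz'⟩, ?_, ?_, ?_⟩, hz'⟩
    · intro x hx
      have := (key x ⊥).1 hx.le
      rw [EReal.bot_div_of_pos_ne_top hg (EReal.coe_ne_top _)] at this
      exact hb x (le_bot_iff.1 this)
    · rw [lowerSemicontinuous_iff_isClosed_preimage] at hl ⊢
      intro y
      convert hl (y / γ) using 1
      ext x
      exact key x y
    · have key' : ∀ x (y : ℝ), rscale γ φ x ≤ y ↔ φ x ≤ ((y / γ : ℝ) : EReal) := by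
        intro x y
        rw [key, EReal.coe_div]
      rintro ⟨z, r⟩ h1 ⟨w, r'⟩ h2 a b ha hb' hab
      simp only [Set.mem_ofPred_eq, key'] at h1 h2
      simp only [Set.mem_ofPred_eq, key']
      have := hc (x := (z, r / γ)) h1 (y := (w, r' / γ)) h2 ha hb' hab
      simp only [Set.mem_ofPred_eq, Prod.smul_mk, Prod.mk_add_mk, smul_eq_mul] at this
      have e3 : a * (r / γ) + b * (r' / γ) = (a * r + b * r') / γ := by ring
      rw [e3] at this
      exact this

theorem aux_rscale_norm {H : Type*} [NormedAddCommGroup H] [InnerProductSpace ℝ H]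
    (γ : ℝ) (φ : ℝ → EReal) (heven : ∀ t : ℝ, φ (-t) = φ t) (h0 : φ 0 ≠ ⊤) :
    rscale γ (fun z : H => φ ‖z‖) = fun z => rscale γ φ ‖z‖ := by
  have habs : ∀ t : ℝ, φ |t| = φ t := by
    intro t
    rcases abs_choice t with h | h <;> rw [h]
    exact heven t
  by_cases h : γ = 0
  · subst h
    ext z
    have : z ∈ closure (edom (fun z : H => φ ‖z‖)) ↔ ‖z‖ ∈ closure (edom φ) := by
      constructor
      · intro hz
        exact map_mem_closure continuous_norm hz (fun w hw => hw)
      · intro hz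
        by_cases hz0 : z = 0
        · subst hz0
          apply subset_closure
          show φ ‖(0 : H)‖ < ⊤
          simpa using lt_top_iff_ne_top.2 h0
        · have hn : ‖z‖ ≠ 0 := norm_ne_zero_iff.2 hz0
          have hcont : Continuous (fun t : ℝ => (t / ‖z‖) • z) := by fun_prop
          have := map_mem_closure (t := edom (fun z : H => φ ‖z‖)) hcont hz (fun t ht => by
            show φ ‖(t / ‖z‖) • z‖ < ⊤
            have : ‖(t / ‖z‖) • z‖ = |t| := by
              rw [norm_smul, Real.norm_eq_abs, abs_div, abs_norm]
              field_simp
            rw [this, habs]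
            exact ht)
          simpa [div_self hn] using this
    simp only [rscale, if_true, this]
  · simp [rscale, h]

theorem aux_unique {E : Type*} [NormedAddCommGroup E] [InnerProductSpace ℝ E]
    (f : E → EReal) (hf : IsGamma0 f) (x p : E)
    (hp : ∀ y, f p + ((‖x - p‖ ^ 2 / 2 : ℝ) : EReal) ≤ f y + ((‖x - y‖ ^ 2 / 2 : ℝ) : EReal)) :
    prox f x = p := by
  have hq := Classical.epsilon_spec (p := fun p => ∀ y, f p + ((‖x - p‖ ^ 2 / 2 : ℝ) : EReal) ≤
    f y + ((‖x - y‖ ^ 2 / 2 : ℝ) : EReal)) ⟨p, hp⟩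
  change ∀ y, f (prox f x) + ((‖x - prox f x‖ ^ 2 / 2 : ℝ) : EReal) ≤
    f y + ((‖x - y‖ ^ 2 / 2 : ℝ) : EReal) at hq
  generalize prox f x = q at hq
  obtain ⟨⟨w, hw⟩, hb, hl, hc⟩ := hf
  have fin : ∀ p, (∀ y, f p + ((‖x - p‖ ^ 2 / 2 : ℝ) : EReal) ≤
      f y + ((‖x - y‖ ^ 2 / 2 : ℝ) : EReal)) → ∃ r : ℝ, f p = r := by
    intro p hp
    refine ⟨(f p).toReal, (EReal.coe_toReal ?_ (hb p)).symm⟩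
    intro htop
    have h1 := hp w
    rw [htop, EReal.top_add_coe, ← EReal.coe_toReal hw (hb w), ← EReal.coe_add] at h1
    exact EReal.coe_ne_top _ (top_le_iff.1 h1)
  obtain ⟨r, hr⟩ := fin p hp
  obtain ⟨s, hs⟩ := fin q hq
  have h1 := hp q
  have h2 := hq p
  have h3 := hc (x := (p, r)) hr.le (y := (q, s)) hs.le (a := 1 / 2) (b := 1 / 2)
    (by norm_num) (by norm_num) (by norm_num)
  simp only [Set.mem_ofPred_eq, Prod.smul_mk, Prod.mk_add_mk, smul_eq_mul] at h3
  have h4 := (hp ((1 / 2 : ℝ) • p + (1 / 2 : ℝ) • q)).trans (add_le_add_left h3 _)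
  rw [hr, hs] at h1 h2
  rw [hr] at h4
  norm_cast at h1 h2 h4
  have hpar := parallelogram_law_with_norm ℝ (x - p) (x - q)
  have e1 : x - p + (x - q) = (2 : ℝ) • (x - ((1 / 2 : ℝ) • p + (1 / 2 : ℝ) • q)) := by
    module
  have e2 : x - p - (x - q) = q - p := by abel
  rw [e1, e2, norm_smul] at hpar
  norm_num at hpar h4
  have : ‖q - p‖ * ‖q - p‖ ≤ 0 := by nlinarith
  have : ‖q - p‖ = 0 := by nlinarith [norm_nonneg (q - p)]
  exact sub_eq_zero.1 (norm_eq_zero.1 this)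

theorem aux_exists (g : ℝ → EReal) (hg : IsGamma0 g) (heven : ∀ t : ℝ, g (-t) = g t)
    (a : ℝ) (ha : 0 ≤ a) : ∃ p, 0 ≤ p ∧ p ≤ a ∧
    ∀ y, g p + ((‖a - p‖ ^ 2 / 2 : ℝ) : EReal) ≤ g y + ((‖a - y‖ ^ 2 / 2 : ℝ) : EReal) := by
  obtain ⟨_, hb, hl, hc⟩ := hg
  have hlsc : LowerSemicontinuous (fun y => g y + ((‖a - y‖ ^ 2 / 2 : ℝ) : EReal)) := by
    apply LowerSemicontinuous.add' hl
    · apply Continuous.lowerSemicontinuous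
      apply continuous_coe_real_ereal.comp
      fun_prop
    · intro x
      exact EReal.continuousAt_add (Or.inr (EReal.coe_ne_bot _)) (Or.inr (EReal.coe_ne_top _))
  obtain ⟨p, hp, hmin⟩ := (hlsc.lowerSemicontinuousOn (Set.Icc 0 a)).exists_isMinOn
    (Set.nonempty_Icc.2 ha) isCompact_Icc
  refine ⟨p, hp.1, hp.2, ?_⟩
  have hpos : ∀ y, 0 ≤ y → g p + ((‖a - p‖ ^ 2 / 2 : ℝ) : EReal) ≤
      g y + ((‖a - y‖ ^ 2 / 2 : ℝ) : EReal) := by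
    intro y hy
    rcases le_total y a with h | h
    · exact hmin ⟨hy, h⟩
    · refine le_trans (hmin (Set.right_mem_Icc.2 ha)) ?_
      refine add_le_add (aux_mono g hb hc heven ha h) ?_
      rw [EReal.coe_le_coe_iff]
      simp
      positivity
  intro y
  rcases le_total 0 y with h | h
  · exact hpos y h
  · refine (hpos (-y) (by linarith)).trans ?_
    rw [heven]
    refine add_le_add le_rfl ?_
    rw [EReal.coe_le_coe_iff]
    simp only [Real.norm_eq_abs, sq_abs]
    nlinarith


/-- Lemma 3.2(i). -/
theorem stmt2 {H : Type*} [NormedAddCommGroup H] [InnerProductSpace ℝ H] [CompleteSpace H]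
    (γ : ℝ) (hγ : 0 ≤ γ) (φ : ℝ → EReal) (hφ : IsGamma0 φ)
    (heven : ∀ t : ℝ, φ (-t) = φ t) (h0 : (0 : ℝ) ∈ interior (edom φ)) (x : H) :
    IsGamma0 (fun z : H => φ ‖z‖) ∧
    (x ≠ 0 → prox (rscale γ (fun z : H => φ ‖z‖)) x
              = (prox (rscale γ φ) ‖x‖ / ‖x‖) • x) ∧
    (x = 0 → prox (rscale γ (fun z : H => φ ‖z‖)) x = 0) := by
  have h0' : φ 0 ≠ ⊤ := ne_of_lt (show φ 0 < ⊤ from interior_subset (s := edom φ) h0)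
  refine ⟨aux_gamma φ hφ heven h0', ?_⟩
  obtain ⟨hg, hg0⟩ := aux_rscale γ hγ φ hφ h0'
  have hge : ∀ t : ℝ, rscale γ φ (-t) = rscale γ φ t := by
    intro t
    have e := congrFun (aux_rscale_norm (H := ℝ) γ φ heven h0')
    have e2 : (fun z : ℝ => φ ‖z‖) = φ := by
      ext t
      rw [Real.norm_eq_abs]
      rcases abs_choice t with h | h <;> rw [h]
      exact heven t
    rw [e2] at e
    rw [e (-t), e t, norm_neg]
  rw [aux_rscale_norm γ φ heven h0']
  generalize rscale γ φ = g at hg hg0 hge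
  have hG := aux_gamma (H := H) g hg hge hg0
  obtain ⟨p, hp0, hpa, hmin⟩ := aux_exists g hg hge ‖x‖ (norm_nonneg x)
  have hpr : prox g ‖x‖ = p := aux_unique g hg _ _ hmin
  have main : ∀ q : H, ‖q‖ = p → ‖x - q‖ = ‖x‖ - p → prox (fun z : H => g ‖z‖) x = q := by
    intro q hq hxq
    apply aux_unique _ hG
    intro y
    rw [hxq, hq]
    have h1 := hmin ‖y‖
    rw [Real.norm_eq_abs, sq_abs] at h1
    refine h1.trans (add_le_add le_rfl ?_)
    rw [EReal.coe_le_coe_iff]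
    have := abs_norm_sub_norm_le x y
    have h3 : ‖‖x‖ - ‖y‖‖ ^ 2 ≤ ‖x - y‖ ^ 2 := by
      rw [Real.norm_eq_abs]
      gcongr
    linarith
  constructor
  · intro hx
    have hn : 0 < ‖x‖ := norm_pos_iff.2 hx
    rw [hpr]
    apply main
    · rw [norm_smul, Real.norm_eq_abs, abs_of_nonneg (by positivity)]
      field_simp
    · have : x - (p / ‖x‖) • x = (1 - p / ‖x‖) • x := by module
      rw [this, norm_smul, Real.norm_eq_abs, abs_of_nonneg]
      · field_simp
      · have := (div_le_one hn).2 hpa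
        linarith
  · intro hx
    subst hx
    have : p = 0 := by
      rw [norm_zero] at hpa
      linarith
    apply main <;> simp [this]
end

section
/- Let γ ∈ [0,+∞), let φ ∈ Γ₀(ℝ) be even with 0 in the interior of dom φ, set Φ = φ ∘ ‖·‖ on H, and let x ∈ H. Then Φ(prox_{γ⊙Φ} x) = φ(prox_{γ⊙φ}‖x‖). -/
open scoped Classical

lemma aux_mono_s3 (ψ : ℝ → EReal) (hbot : ∀ t, ψ t ≠ ⊥) (hconv : ConvexEpi ψ)
    (heven : ∀ t, ψ (-t) = ψ t) {s t : ℝ} (h1 : -t ≤ s) (h2 : s ≤ t) : ψ s ≤ ψ t := by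
  by_cases htop : ψ t = ⊤
  · rw [htop]; exact le_top
  obtain ⟨α, hα⟩ : ∃ α : ℝ, ψ t = (α : EReal) :=
    ⟨(ψ t).toReal, (EReal.coe_toReal htop (hbot t)).symm⟩
  rcases eq_or_lt_of_le (show 0 ≤ t by linarith) with h | h
  · have : s = t := by linarith
    rw [this]
  have ha : (t, α) ∈ {p : ℝ × ℝ | ψ p.1 ≤ (p.2 : EReal)} := hα.le
  have hb : (-t, α) ∈ {p : ℝ × ℝ | ψ p.1 ≤ (p.2 : EReal)} := by
    show ψ (-t) ≤ α
    rw [heven]; exact hα.le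
  have hc := hconv ha hb (a := (1 + s / t) / 2) (b := (1 - s / t) / 2)
    (by have : -1 ≤ s / t := by rw [le_div_iff₀ h]; linarith
        linarith)
    (by have : s / t ≤ 1 := by rw [div_le_iff₀ h]; linarith
        linarith) (by ring)
  have hc' : ψ ((1 + s / t) / 2 * t + (1 - s / t) / 2 * (-t))
      ≤ (((1 + s / t) / 2 * α + (1 - s / t) / 2 * α : ℝ) : EReal) := hc
  have e1 : (1 + s / t) / 2 * t + (1 - s / t) / 2 * (-t) = s := by field_simp; ring
  have e2 : (1 + s / t) / 2 * α + (1 - s / t) / 2 * α = α := by ring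
  rw [e1, e2] at hc'
  rw [hα]; exact hc'

lemma aux_unique_s3 (ψ : ℝ → EReal) (hbot : ∀ t, ψ t ≠ ⊥) (hconv : ConvexEpi ψ)
    (h0 : ψ 0 ≠ ⊤) (r a b : ℝ)
    (ha : ∀ y, ψ a + ((‖r - a‖ ^ 2 / 2 : ℝ) : EReal) ≤ ψ y + ((‖r - y‖ ^ 2 / 2 : ℝ) : EReal))
    (hb : ∀ y, ψ b + ((‖r - b‖ ^ 2 / 2 : ℝ) : EReal) ≤ ψ y + ((‖r - y‖ ^ 2 / 2 : ℝ) : EReal)) :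
    a = b := by
  have fin : ∀ c, (∀ y, ψ c + ((‖r - c‖ ^ 2 / 2 : ℝ) : EReal)
      ≤ ψ y + ((‖r - y‖ ^ 2 / 2 : ℝ) : EReal)) → ∃ α : ℝ, ψ c = (α : EReal) := by
    intro c hc
    refine ⟨(ψ c).toReal, (EReal.coe_toReal ?_ (hbot c)).symm⟩
    intro htop
    have := hc 0
    rw [htop, EReal.top_add_coe, top_le_iff] at this
    exact (EReal.add_lt_top h0 (EReal.coe_ne_top _)).ne this
  obtain ⟨α, hα⟩ := fin a ha
  obtain ⟨β, hβ⟩ := fin b hb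
  have hA : (a, α) ∈ {p : ℝ × ℝ | ψ p.1 ≤ (p.2 : EReal)} := hα.le
  have hB : (b, β) ∈ {p : ℝ × ℝ | ψ p.1 ≤ (p.2 : EReal)} := hβ.le
  have hc : ψ (1 / 2 * a + 1 / 2 * b) ≤ ((1 / 2 * α + 1 / 2 * β : ℝ) : EReal) :=
    hconv hA hB (a := 1 / 2) (b := 1 / 2) (by norm_num) (by norm_num) (by norm_num)
  have k1 := (ha (1 / 2 * a + 1 / 2 * b)).trans (add_le_add_left hc _)
  have k2 := (hb (1 / 2 * a + 1 / 2 * b)).trans (add_le_add_left hc _)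
  rw [hα] at k1
  rw [hβ] at k2
  norm_cast at k1 k2
  simp only [Real.norm_eq_abs, sq_abs] at k1 k2
  have : (a - b) ^ 2 ≤ 0 := by nlinarith
  nlinarith [pow_eq_zero_iff (two_ne_zero) |>.1 (le_antisymm this (sq_nonneg (a - b)))]

lemma aux_core {H : Type*} [NormedAddCommGroup H] [InnerProductSpace ℝ H]
    (ψ : ℝ → EReal) (hbot : ∀ t, ψ t ≠ ⊥) (hlsc : LowerSemicontinuous ψ)
    (hconv : ConvexEpi ψ) (heven : ∀ t, ψ (-t) = ψ t) (h0 : ψ 0 ≠ ⊤) (x : H) :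
    ‖prox (fun z : H => ψ ‖z‖) x‖ = prox ψ ‖x‖ := by
  have hF : LowerSemicontinuous
      (fun t : ℝ => ψ t + ((‖‖x‖ - t‖ ^ 2 / 2 : ℝ) : EReal)) := by
    refine LowerSemicontinuous.add' hlsc (Continuous.lowerSemicontinuous ?_) ?_
    · exact continuous_coe_real_ereal.comp (by fun_prop)
    · intro t
      exact EReal.continuousAt_add (Or.inr (EReal.coe_ne_bot _)) (Or.inr (EReal.coe_ne_top _))
  obtain ⟨p, hp, hmin⟩ := LowerSemicontinuousOn.exists_isMinOn
    (s := Set.Icc 0 ‖x‖) ⟨0, by simp⟩ isCompact_Icc (hF.lowerSemicontinuousOn _)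
  have hpmin : ∀ y : ℝ, ψ p + ((‖‖x‖ - p‖ ^ 2 / 2 : ℝ) : EReal)
      ≤ ψ y + ((‖‖x‖ - y‖ ^ 2 / 2 : ℝ) : EReal) := by
    intro y
    have hx := norm_nonneg x
    rcases lt_or_ge y 0 with hy | hy
    · refine (hmin (show (0 : ℝ) ∈ Set.Icc 0 ‖x‖ by simp)).trans ?_
      refine add_le_add ?_ ?_
      · rw [← heven y]
        exact aux_mono_s3 ψ hbot hconv heven (by linarith) (by linarith)
      · rw [EReal.coe_le_coe_iff]
        simp only [Real.norm_eq_abs, sq_abs]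
        nlinarith
    rcases le_or_gt y ‖x‖ with hy2 | hy2
    · exact hmin (show y ∈ Set.Icc 0 ‖x‖ from ⟨hy, hy2⟩)
    · refine (hmin (show ‖x‖ ∈ Set.Icc 0 ‖x‖ by simp)).trans ?_
      refine add_le_add ?_ ?_
      · exact aux_mono_s3 ψ hbot hconv heven (by linarith) (by linarith)
      · rw [EReal.coe_le_coe_iff]
        simp only [Real.norm_eq_abs, sq_abs]
        nlinarith [sq_nonneg (‖x‖ - y)]
  obtain ⟨z0, hz0, hz1⟩ : ∃ z0 : H, ‖z0‖ = p ∧ ‖x - z0‖ = ‖‖x‖ - p‖ := by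
    by_cases hx : x = 0
    · subst hx
      have : p = 0 := by simpa using hp
      exact ⟨0, by simp [this]⟩
    · have hx' : ‖x‖ ≠ 0 := norm_ne_zero_iff.2 hx
      refine ⟨(p / ‖x‖) • x, ?_, ?_⟩
      · rw [norm_smul, Real.norm_eq_abs, abs_of_nonneg (div_nonneg hp.1 (norm_nonneg x))]
        field_simp
      · have : x - (p / ‖x‖) • x = ((‖x‖ - p) / ‖x‖) • x := by
          rw [sub_div, div_self hx', sub_smul, one_smul]
        rw [this, norm_smul, norm_div, norm_norm]
        field_simp
  have hle : ∀ z : H, ψ ‖z‖ + ((‖‖x‖ - ‖z‖‖ ^ 2 / 2 : ℝ) : EReal)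
      ≤ ψ ‖z‖ + ((‖x - z‖ ^ 2 / 2 : ℝ) : EReal) := by
    intro z
    refine add_le_add le_rfl ?_
    rw [EReal.coe_le_coe_iff]
    have := norm_sub_norm_le x z
    have h2 : ‖‖x‖ - ‖z‖‖ ≤ ‖x - z‖ := abs_norm_sub_norm_le x z
    gcongr
  have hz0min : ∀ y : H, ψ ‖z0‖ + ((‖x - z0‖ ^ 2 / 2 : ℝ) : EReal)
      ≤ ψ ‖y‖ + ((‖x - y‖ ^ 2 / 2 : ℝ) : EReal) := by
    intro y
    rw [hz0, hz1]
    exact (hpmin ‖y‖).trans (hle y)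
  have e1 := Classical.epsilon_spec (p := fun p : H => ∀ y : H,
    (fun z : H => ψ ‖z‖) p + ((‖x - p‖ ^ 2 / 2 : ℝ) : EReal)
      ≤ (fun z : H => ψ ‖z‖) y + ((‖x - y‖ ^ 2 / 2 : ℝ) : EReal)) ⟨z0, hz0min⟩
  have e2 := Classical.epsilon_spec (p := fun p : ℝ => ∀ y : ℝ,
    ψ p + ((‖‖x‖ - p‖ ^ 2 / 2 : ℝ) : EReal)
      ≤ ψ y + ((‖‖x‖ - y‖ ^ 2 / 2 : ℝ) : EReal)) ⟨p, hpmin⟩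
  refine aux_unique_s3 ψ hbot hconv h0 ‖x‖ _ _ ?_ e2
  intro y
  refine (hle _).trans ((e1 z0).trans ?_)
  show ψ ‖z0‖ + ((‖x - z0‖ ^ 2 / 2 : ℝ) : EReal) ≤ _
  rw [hz0, hz1]
  exact hpmin y

lemma aux_rscale_s3 {H : Type*} [NormedAddCommGroup H] [InnerProductSpace ℝ H]
    (γ : ℝ) (φ : ℝ → EReal) (heven : ∀ t : ℝ, φ (-t) = φ t) (h0 : (0 : ℝ) ∈ edom φ) :
    rscale γ (fun z : H => φ ‖z‖) = fun z : H => rscale γ φ ‖z‖ := by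
  by_cases hγ : γ = 0
  · have key : ∀ z : H, z ∈ closure (edom (fun z : H => φ ‖z‖)) ↔ ‖z‖ ∈ closure (edom φ) := by
      intro z
      constructor
      · intro hz
        exact map_mem_closure continuous_norm hz (fun w hw => hw)
      · intro hz
        by_cases hz0 : z = 0
        · subst hz0
          apply subset_closure
          show φ ‖(0 : H)‖ < ⊤
          rw [norm_zero]; exact h0
        · have hz' : ‖z‖ ≠ 0 := norm_ne_zero_iff.2 hz0
          have hc : Continuous (fun t : ℝ => (t / ‖z‖) • z) := by fun_prop
          have := map_mem_closure (t := edom (fun z : H => φ ‖z‖)) hc hz (fun t ht => by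
            show φ ‖(t / ‖z‖) • z‖ < ⊤
            have e : ‖(t / ‖z‖) • z‖ = |t| := by
              rw [norm_smul, norm_div, norm_norm, Real.norm_eq_abs]; field_simp
            rw [e]
            rcases abs_choice t with h | h <;> rw [h]
            · exact ht
            · rw [heven]; exact ht)
          simpa [div_self hz'] using this
    funext z
    simp only [rscale, hγ, if_true, key]
  · funext z
    simp [rscale, hγ]

lemma aux_edom_convex (φ : ℝ → EReal) (hbot : ∀ t, φ t ≠ ⊥) (hconv : ConvexEpi φ) :
    Convex ℝ (edom φ) := by
  intro a ha b hb s t hs ht hst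
  have hA : (a, (φ a).toReal) ∈ {p : ℝ × ℝ | φ p.1 ≤ (p.2 : EReal)} :=
    (EReal.coe_toReal (ne_of_lt ha) (hbot a)).ge
  have hB : (b, (φ b).toReal) ∈ {p : ℝ × ℝ | φ p.1 ≤ (p.2 : EReal)} :=
    (EReal.coe_toReal (ne_of_lt hb) (hbot b)).ge
  exact lt_of_le_of_lt (hconv hA hB hs ht hst) (EReal.coe_lt_top _)

lemma aux_props (γ : ℝ) (hγ : 0 ≤ γ) (φ : ℝ → EReal) (hφ : IsGamma0 φ)
    (heven : ∀ t : ℝ, φ (-t) = φ t) (h0 : (0 : ℝ) ∈ edom φ) :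
    (∀ t, rscale γ φ t ≠ ⊥) ∧ LowerSemicontinuous (rscale γ φ) ∧ ConvexEpi (rscale γ φ) ∧
      (∀ t, rscale γ φ (-t) = rscale γ φ t) ∧ rscale γ φ 0 ≠ ⊤ := by
  obtain ⟨-, hbot, hlsc, hconv⟩ := hφ
  by_cases hg : γ = 0
  · have hr : rscale γ φ = fun x => if x ∈ closure (edom φ) then (0 : EReal) else ⊤ := by
      simp [rscale, hg]
    rw [hr]
    refine ⟨?_, ?_, ?_, ?_, ?_⟩
    · intro t
      dsimp only
      split_ifs <;> simp
    · intro t y hy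
      dsimp only at hy
      by_cases ht : t ∈ closure (edom φ)
      · rw [if_pos ht] at hy
        refine Filter.Eventually.of_forall fun u => ?_
        dsimp only
        split_ifs
        · exact hy
        · exact hy.trans EReal.zero_lt_top
      · rw [if_neg ht] at hy
        filter_upwards [isClosed_closure.isOpen_compl.mem_nhds ht] with u hu
        rw [if_neg hu]; exact hy
    · have hset : ∀ p : ℝ × ℝ, ((if p.1 ∈ closure (edom φ) then (0 : EReal) else ⊤)
          ≤ (p.2 : EReal)) ↔ p.1 ∈ closure (edom φ) ∧ 0 ≤ p.2 := by
        intro p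
        split_ifs with h <;> simp [h]
      have hC := (aux_edom_convex φ hbot hconv).closure
      intro a ha b hb s t hs ht hst
      have ha' := (hset a).1 ha
      have hb' := (hset b).1 hb
      refine (hset _).2 ⟨hC ha'.1 hb'.1 hs ht hst, ?_⟩
      show 0 ≤ s * a.2 + t * b.2
      have := ha'.2
      have := hb'.2
      positivity
    · have h1 : ∀ t, t ∈ closure (edom φ) → -t ∈ closure (edom φ) := fun t ht =>
        map_mem_closure continuous_neg ht (fun u hu => by
          show φ (-u) < ⊤
          rw [heven]; exact hu)
      intro t
      have : -t ∈ closure (edom φ) ↔ t ∈ closure (edom φ) :=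
        ⟨fun h => by simpa using h1 _ h, h1 t⟩
      simp only [this]
    · dsimp only
      rw [if_pos (subset_closure h0)]
      simp
  · have hpos : 0 < γ := lt_of_le_of_ne hγ (Ne.symm hg)
    have hr : rscale γ φ = fun x => (γ : EReal) * φ x := by
      simp [rscale, hg]
    rw [hr]
    refine ⟨?_, ?_, ?_, ?_, ?_⟩
    · intro t
      dsimp only
      induction h : φ t with
      | bot => exact absurd h (hbot t)
      | coe a =>
        show (γ : EReal) * (a : EReal) ≠ ⊥
        rw [← EReal.coe_mul]; exact EReal.coe_ne_bot _
      | top =>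
        show (γ : EReal) * ⊤ ≠ ⊥
        rw [EReal.coe_mul_top_of_pos hpos]; simp
    · exact (continuous_iff_continuousAt.2 fun a => ((EReal.continuousAt_mul (p := ((γ : EReal), a))
          (Or.inl (by simpa using hg)) (Or.inl (by simpa using hg))
          (Or.inl (EReal.coe_ne_bot _)) (Or.inl (EReal.coe_ne_top _))).comp
          (f := fun a : EReal => ((γ : EReal), a)) (by fun_prop) :
          ContinuousAt (fun a : EReal => (γ : EReal) * a) a)).comp_lowerSemicontinuous hlsc
        (fun a b hab => mul_le_mul_of_nonneg_left hab (by simpa using hγ))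
    · have hset : ∀ p : ℝ × ℝ, ((γ : EReal) * φ p.1
          ≤ (p.2 : EReal)) ↔ φ p.1 ≤ ((p.2 / γ : ℝ) : EReal) := by
        intro p
        induction h : φ p.1 with
        | bot => exact absurd h (hbot _)
        | coe a =>
          rw [← EReal.coe_mul, EReal.coe_le_coe_iff, EReal.coe_le_coe_iff, le_div_iff₀ hpos,
            mul_comm]
        | top => rw [EReal.coe_mul_top_of_pos hpos]; simp
      intro a ha b hb s t hs ht hst
      have ha' := (hset a).1 ha
      have hb' := (hset b).1 hb
      refine (hset _).2 ?_
      have hA : (a.1, a.2 / γ) ∈ {p : ℝ × ℝ | φ p.1 ≤ (p.2 : EReal)} := ha'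
      have hB : (b.1, b.2 / γ) ∈ {p : ℝ × ℝ | φ p.1 ≤ (p.2 : EReal)} := hb'
      have hc : φ (s * a.1 + t * b.1) ≤ ((s * (a.2 / γ) + t * (b.2 / γ) : ℝ) : EReal) :=
        hconv hA hB hs ht hst
      have e : s * (a.2 / γ) + t * (b.2 / γ) = (s * a.2 + t * b.2) / γ := by ring
      rw [e] at hc
      exact hc
    · intro t
      simp only [heven]
    · have h0' : φ 0 ≠ ⊤ := ne_of_lt h0
      dsimp only
      rw [← EReal.coe_toReal h0' (hbot 0), ← EReal.coe_mul]
      exact EReal.coe_ne_top _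

/-- Lemma 3.2(ii). `Φ(prox_{γ⊙Φ} x) = φ(prox_{γ⊙φ} ‖x‖)`. -/
theorem stmt3 {H : Type*} [NormedAddCommGroup H] [InnerProductSpace ℝ H] [CompleteSpace H]
    (γ : ℝ) (hγ : 0 ≤ γ) (φ : ℝ → EReal) (hφ : IsGamma0 φ)
    (heven : ∀ t : ℝ, φ (-t) = φ t) (h0 : (0 : ℝ) ∈ interior (edom φ)) (x : H) :
    (fun z : H => φ ‖z‖) (prox (rscale γ (fun z : H => φ ‖z‖)) x)
      = φ (prox (rscale γ φ) ‖x‖) := by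
  have h0' : (0 : ℝ) ∈ edom φ := interior_subset h0
  obtain ⟨h1, h2, h3, h4, h5⟩ := aux_props γ hγ φ hφ heven h0'
  show φ ‖prox (rscale γ (fun z : H => φ ‖z‖)) x‖ = _
  rw [aux_rscale_s3 γ φ heven h0', aux_core (rscale γ φ) h1 h2 h3 h4 h5 x]
end

section
/- Let f ∈ Γ₀(H), let x ∈ H, and define Φ: [0,+∞) → (−∞,+∞] by Φ(γ) = f(prox_{γ⊙f} x). Then Φ is continuous on [0,+∞) as an extended-real-valued function: for every μ ∈ [0,+∞) and every sequence (γ_n) in [0,+∞) with γ_n → μ, one has Φ(γ_n) → Φ(μ) in (−∞,+∞]. -/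
open scoped Classical

open Filter Topology

section helpers

theorem hhalf : (0:ℝ) ≤ 1/2 := by norm_num

theorem hone : (1/2:ℝ) + 1/2 = 1 := by norm_num

variable {H : Type*} [NormedAddCommGroup H] [InnerProductSpace ℝ H]

theorem hp_coe {f : H → EReal} (hf : IsGamma0 f) {y : H} (hy : y ∈ edom f) :
    f y = (((f y).toReal : ℝ) : EReal) :=
  (EReal.coe_toReal (ne_of_lt hy) (hf.2.1 y)).symm

theorem hp_convex {f : H → EReal} (hf : IsGamma0 f) :
    ConvexOn ℝ (edom f) (fun y => (f y).toReal) := by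
  have key : ∀ y ∈ edom f, ∀ z ∈ edom f, ∀ a b : ℝ, 0 ≤ a → 0 ≤ b → a + b = 1 →
      f (a • y + b • z) ≤ ((a * (f y).toReal + b * (f z).toReal : ℝ) : EReal) := by
    intro y hy z hz a b ha hb hab
    have := hf.2.2.2 (x := (y, (f y).toReal)) (by simpa using (hp_coe hf hy).le)
      (y := (z, (f z).toReal)) (by simpa using (hp_coe hf hz).le) ha hb hab
    simpa using this
  have hc : Convex ℝ (edom f) := by
    intro y hy z hz a b ha hb hab
    exact lt_of_le_of_lt (key y hy z hz a b ha hb hab) (EReal.coe_lt_top _)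
  refine ⟨hc, ?_⟩
  intro y hy z hz a b ha hb hab
  have h1 := key y hy z hz a b ha hb hab
  rw [hp_coe hf (hc hy hz ha hb hab)] at h1
  simpa using EReal.coe_le_coe_iff.1 h1

theorem hp_minorant {f : H → EReal} (hf : IsGamma0 f) (p : H) :
    ∃ a b : ℝ, 0 ≤ a ∧ 0 ≤ b ∧ ∀ y ∈ edom f, -a - b * ‖y - p‖ ≤ (f y).toReal := by
  obtain ⟨x0, hx0⟩ := hf.1
  have hx0 : x0 ∈ edom f := lt_top_iff_ne_top.2 hx0
  have hl : (((f x0).toReal - 1 : ℝ) : EReal) < f x0 := by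
    conv_rhs => rw [hp_coe hf hx0]
    exact EReal.coe_lt_coe_iff.2 (by linarith)
  obtain ⟨δ, hδ, hball⟩ := Metric.eventually_nhds_iff.1 (hf.2.2.1 x0 _ hl)
  refine ⟨|(f x0).toReal| + 1 + δ⁻¹ * ‖p - x0‖, δ⁻¹, by positivity, by positivity, ?_⟩
  intro y hy
  set r := ‖y - x0‖ with hr
  have hr0 : 0 ≤ r := norm_nonneg _
  set t := δ / (δ + r) with ht
  have hpos : 0 < δ + r := by positivity
  have ht0 : 0 < t := by positivity
  have ht1 : t ≤ 1 := by rw [ht, div_le_one hpos]; linarith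
  have htr : t * (δ + r) = δ := by rw [ht]; field_simp
  have hc := hp_convex hf
  have hzD := hc.1 hx0 hy (sub_nonneg.2 ht1) ht0.le (by ring)
  have hz := hc.2 hx0 hy (sub_nonneg.2 ht1) ht0.le (by ring)
  have hd : dist ((1 - t) • x0 + t • y) x0 < δ := by
    have : (1 - t) • x0 + t • y - x0 = t • (y - x0) := by module
    rw [dist_eq_norm, this, norm_smul, Real.norm_of_nonneg ht0.le, ← hr]
    nlinarith
  have h2 : (((f x0).toReal - 1 : ℝ) : EReal) < f ((1 - t) • x0 + t • y) := hball hd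
  rw [hp_coe hf hzD] at h2
  have h2 := EReal.coe_lt_coe_iff.1 h2
  simp only [smul_eq_mul] at hz
  have h3 : -1 ≤ t * ((f y).toReal - (f x0).toReal) := by linarith
  have h4 : -(1 + δ⁻¹ * r) ≤ (f y).toReal - (f x0).toReal := by
    have e : t * (1 + δ⁻¹ * r) = 1 := by
      rw [ht]; field_simp
    by_contra hcon
    push Not at hcon
    nlinarith
  have h5 : r ≤ ‖y - p‖ + ‖p - x0‖ := by
    have : y - x0 = (y - p) + (p - x0) := by abel
    rw [hr, this]; exact norm_add_le _ _
  have h6 : δ⁻¹ * r ≤ δ⁻¹ * (‖y - p‖ + ‖p - x0‖) := by gcongr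
  have := neg_abs_le (f x0).toReal
  linarith

theorem hp_mid (x y z : H) :
    ‖x - ((1/2:ℝ) • y + (1/2:ℝ) • z)‖ ^ 2 / 2 =
      (‖x - y‖ ^ 2 / 2 + ‖x - z‖ ^ 2 / 2) / 2 - ‖y - z‖ ^ 2 / 8 := by
  have e1 : x - ((1/2:ℝ) • y + (1/2:ℝ) • z) = (1/2:ℝ) • ((x - y) + (x - z)) := by module
  have e2 : y - z = (x - z) - (x - y) := by abel
  have := parallelogram_law_with_norm ℝ (x - z) (x - y)
  rw [← e2] at this
  rw [e1, norm_smul, add_comm (x - y), mul_pow, Real.norm_of_nonneg hhalf]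
  linear_combination (1/8) * this

theorem hp_strong {C : Set H} {F : H → ℝ} (hF : ConvexOn ℝ C F) {x p : H} {c : ℝ} (hc : 0 ≤ c)
    (hp : p ∈ C) (hmin : ∀ y ∈ C, c * F p + ‖x - p‖ ^ 2 / 2 ≤ c * F y + ‖x - y‖ ^ 2 / 2)
    (y : H) (hy : y ∈ C) :
    c * F p + ‖x - p‖ ^ 2 / 2 + ‖y - p‖ ^ 2 / 4 ≤ c * F y + ‖x - y‖ ^ 2 / 2 := by
  have hz := hF.1 hy hp hhalf hhalf hone
  have h1 := hF.2 hy hp hhalf hhalf hone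
  have h2 := hmin _ hz
  rw [hp_mid] at h2
  have h3 := mul_le_mul_of_nonneg_left h1 hc
  simp only [smul_eq_mul] at h3
  linarith

theorem hp_exists [CompleteSpace H] {f : H → EReal} (hf : IsGamma0 f) (x : H) {c : ℝ}
    (hc : 0 < c) :
    ∃ p ∈ edom f, ∀ y ∈ edom f,
      c * (f p).toReal + ‖x - p‖ ^ 2 / 2 ≤ c * (f y).toReal + ‖x - y‖ ^ 2 / 2 := by
  set g : H → ℝ := fun y => c * (f y).toReal + ‖x - y‖ ^ 2 / 2 with hg
  obtain ⟨a, b, ha, hb, hab⟩ := hp_minorant hf x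
  have hcv := hp_convex hf
  have hbdd : BddBelow (g '' edom f) := by
    refine ⟨-c * a - (c * b) ^ 2 / 2, ?_⟩
    rintro _ ⟨y, hy, rfl⟩
    have h1 := mul_le_mul_of_nonneg_left (hab y hy) hc.le
    rw [norm_sub_rev] at h1
    simp only [hg]
    nlinarith [sq_nonneg (‖x - y‖ - c * b)]
  have hne : (g '' edom f).Nonempty := by
    obtain ⟨x0, hx0⟩ := hf.1
    exact ⟨_, x0, lt_top_iff_ne_top.2 hx0, rfl⟩
  set m := sInf (g '' edom f) with hm
  have hmle : ∀ y ∈ edom f, m ≤ g y := fun y hy => csInf_le hbdd ⟨y, hy, rfl⟩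
  have hex : ∀ n : ℕ, ∃ y ∈ edom f, g y < m + 1 / ((n : ℝ) + 1) := by
    intro n
    obtain ⟨_, ⟨y, hy, rfl⟩, h⟩ := exists_lt_of_csInf_lt hne
      (show m < m + 1 / ((n : ℝ) + 1) by linarith [Nat.one_div_pos_of_nat (α := ℝ) (n := n)])
    exact ⟨y, hy, h⟩
  choose u huD hu using hex
  have hmid : ∀ n k, ‖u n - u k‖ ^ 2 ≤ 4 * (1 / ((n : ℝ) + 1) + 1 / ((k : ℝ) + 1)) := by
    intro n k
    have hz := hcv.1 (huD n) (huD k) hhalf hhalf hone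
    have h1 := hcv.2 (huD n) (huD k) hhalf hhalf hone
    have h2 := hmle _ hz
    have h3 := mul_le_mul_of_nonneg_left h1 hc.le
    have h4 := hu n
    have h5 := hu k
    simp only [hg] at h2 h4 h5
    rw [hp_mid] at h2
    simp only [smul_eq_mul] at h3
    linarith
  have hcau : CauchySeq u := by
    rw [Metric.cauchySeq_iff]
    intro ε hε
    obtain ⟨N, hN⟩ := exists_nat_one_div_lt (show 0 < ε ^ 2 / 8 by positivity)
    refine ⟨N, fun n hn k hk => ?_⟩
    have h1 := hmid n k
    have h2 := Nat.one_div_le_one_div (α := ℝ) hn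
    have h3 := Nat.one_div_le_one_div (α := ℝ) hk
    rw [dist_eq_norm]
    exact lt_of_pow_lt_pow_left₀ 2 hε.le (by linarith)
  obtain ⟨p, hp⟩ := cauchySeq_tendsto_of_complete hcau
  have hL : f p ≤ (((m - ‖x - p‖ ^ 2 / 2) / c : ℝ) : EReal) := by
    by_contra hcon
    push Not at hcon
    obtain ⟨d, hd1, hd2⟩ := EReal.lt_iff_exists_real_btwn.1 hcon
    have hd1 := EReal.coe_lt_coe_iff.1 hd1
    have h1 := hp.eventually (hf.2.2.1 p _ hd2)
    have h2 : Tendsto (fun n : ℕ => (m + 1 / ((n : ℝ) + 1) - ‖x - u n‖ ^ 2 / 2) / c) atTop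
        (𝓝 ((m + 0 - ‖x - p‖ ^ 2 / 2) / c)) :=
      ((tendsto_const_nhds.add tendsto_one_div_add_atTop_nhds_zero_nat).sub
        (((tendsto_const_nhds.sub hp).norm.pow 2).div_const 2)).div_const c
    rw [add_zero] at h2
    obtain ⟨n, hn1, hn2⟩ := (h1.and (h2.eventually (gt_mem_nhds hd1))).exists
    rw [hp_coe hf (huD n)] at hn1
    have hn1 := EReal.coe_lt_coe_iff.1 hn1
    have h3 := hu n
    simp only [hg] at h3
    rw [div_lt_iff₀ hc] at hn2
    nlinarith
  have hpD : p ∈ edom f := lt_of_le_of_lt hL (EReal.coe_lt_top _)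
  refine ⟨p, hpD, fun y hy => ?_⟩
  rw [hp_coe hf hpD] at hL
  have hL := EReal.coe_le_coe_iff.1 hL
  rw [le_div_iff₀ hc] at hL
  have := hmle y hy
  simp only [hg] at this
  linarith

theorem hp_pos [CompleteSpace H] {f : H → EReal} (hf : IsGamma0 f) (x : H) {c : ℝ}
    (hc : 0 < c) :
    prox (rscale c f) x ∈ edom f ∧ ∀ y ∈ edom f,
      c * (f (prox (rscale c f) x)).toReal + ‖x - prox (rscale c f) x‖ ^ 2 / 2
        + ‖y - prox (rscale c f) x‖ ^ 2 / 4 ≤ c * (f y).toReal + ‖x - y‖ ^ 2 / 2 := by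
  have hr : rscale c f = fun y => (c : EReal) * f y := by simp [rscale, hc.ne']
  have hval : ∀ y ∈ edom f, rscale c f y + ((‖x - y‖ ^ 2 / 2 : ℝ) : EReal)
      = ((c * (f y).toReal + ‖x - y‖ ^ 2 / 2 : ℝ) : EReal) := by
    intro y hy
    rw [hr]
    simp only
    conv_lhs => rw [hp_coe hf hy]
    norm_cast
  have htop : ∀ y, y ∉ edom f → rscale c f y + ((‖x - y‖ ^ 2 / 2 : ℝ) : EReal) = ⊤ := by
    intro y hy
    have : f y = ⊤ := by simpa [edom] using hy
    rw [hr]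
    simp only [this, EReal.coe_mul_top_of_pos hc, EReal.top_add_coe]
  obtain ⟨q, hq, hqm⟩ := hp_exists hf x hc
  have hspec : ∀ y, rscale c f (prox (rscale c f) x)
      + ((‖x - prox (rscale c f) x‖ ^ 2 / 2 : ℝ) : EReal)
      ≤ rscale c f y + ((‖x - y‖ ^ 2 / 2 : ℝ) : EReal) := by
    apply Classical.epsilon_spec (p := fun p => ∀ y, rscale c f p
      + ((‖x - p‖ ^ 2 / 2 : ℝ) : EReal) ≤ rscale c f y + ((‖x - y‖ ^ 2 / 2 : ℝ) : EReal))
    refine ⟨q, fun y => ?_⟩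
    by_cases hy : y ∈ edom f
    · rw [hval q hq, hval y hy]
      exact EReal.coe_le_coe_iff.2 (hqm y hy)
    · rw [htop y hy]; exact le_top
  generalize prox (rscale c f) x = p at hspec ⊢
  have hp : p ∈ edom f := by
    by_contra hp
    have := hspec q
    rw [htop p hp, hval q hq] at this
    exact absurd this (not_le.2 (EReal.coe_lt_top _))
  refine ⟨hp, fun y hy => hp_strong (hp_convex hf) hc.le hp (fun y hy => ?_) y hy⟩
  have := hspec y
  rw [hval p hp, hval y hy] at this
  exact EReal.coe_le_coe_iff.1 this

theorem hp_zero [CompleteSpace H] {f : H → EReal} (hf : IsGamma0 f) (x : H) :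
    prox (rscale 0 f) x ∈ closure (edom f) ∧ ∀ y ∈ closure (edom f),
      ‖x - prox (rscale 0 f) x‖ ^ 2 / 2
        + ‖y - prox (rscale 0 f) x‖ ^ 2 / 4 ≤ ‖x - y‖ ^ 2 / 2 := by
  have hcv := (hp_convex hf).1.closure
  have hval : ∀ y ∈ closure (edom f), rscale 0 f y + ((‖x - y‖ ^ 2 / 2 : ℝ) : EReal)
      = ((‖x - y‖ ^ 2 / 2 : ℝ) : EReal) := by
    intro y hy
    simp [rscale, hy]
  have htop : ∀ y, y ∉ closure (edom f) →
      rscale 0 f y + ((‖x - y‖ ^ 2 / 2 : ℝ) : EReal) = ⊤ := by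
    intro y hy
    simp only [rscale, hy, if_true, if_false, EReal.top_add_coe]
  have hne : (closure (edom f)).Nonempty := by
    obtain ⟨x0, hx0⟩ := hf.1
    exact ⟨x0, subset_closure (lt_top_iff_ne_top.2 hx0)⟩
  obtain ⟨q, hq, hqm⟩ := exists_norm_eq_iInf_of_complete_convex hne
    isClosed_closure.isComplete hcv x
  have hqm : ∀ y ∈ closure (edom f), ‖x - q‖ ≤ ‖x - y‖ := by
    intro y hy
    rw [hqm]
    exact ciInf_le (f := fun w : closure (edom f) => ‖x - w‖)
      ⟨0, by rintro _ ⟨w, rfl⟩; exact norm_nonneg _⟩ ⟨y, hy⟩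
  have hspec : ∀ y, rscale 0 f (prox (rscale 0 f) x)
      + ((‖x - prox (rscale 0 f) x‖ ^ 2 / 2 : ℝ) : EReal)
      ≤ rscale 0 f y + ((‖x - y‖ ^ 2 / 2 : ℝ) : EReal) := by
    apply Classical.epsilon_spec (p := fun p => ∀ y, rscale 0 f p
      + ((‖x - p‖ ^ 2 / 2 : ℝ) : EReal) ≤ rscale 0 f y + ((‖x - y‖ ^ 2 / 2 : ℝ) : EReal))
    refine ⟨q, fun y => ?_⟩
    by_cases hy : y ∈ closure (edom f)
    · rw [hval q hq, hval y hy]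
      have := hqm y hy
      exact EReal.coe_le_coe_iff.2 (by gcongr)
    · rw [htop y hy]; exact le_top
  generalize prox (rscale 0 f) x = p at hspec ⊢
  have hp : p ∈ closure (edom f) := by
    by_contra hp
    have := hspec q
    rw [htop p hp, hval q hq] at this
    exact absurd this (not_le.2 (EReal.coe_lt_top _))
  refine ⟨hp, fun y hy => ?_⟩
  have := hp_strong (convexOn_const (0:ℝ) hcv) (x := x) (c := 0) le_rfl hp (fun y hy => ?_) y hy
  · simpa using this
  have := hspec y
  rw [hval p hp, hval y hy] at this
  simpa using EReal.coe_le_coe_iff.1 this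

/-- Case `μ = 0`: convergence of the proximal points. -/
theorem hp_conv_zero [CompleteSpace H] {f : H → EReal} (hf : IsGamma0 f) (x : H)
    (γ : ℕ → ℝ) (hγ : ∀ n, 0 ≤ γ n) (hlim : Tendsto γ atTop (𝓝 0)) :
    Tendsto (fun n => prox (rscale (γ n) f) x) atTop (𝓝 (prox (rscale 0 f) x)) := by
  obtain ⟨hp, hpm⟩ := hp_zero hf x
  set p := prox (rscale 0 f) x with hpdef
  obtain ⟨a, b, ha, hb, hab⟩ := hp_minorant hf p
  rw [Metric.tendsto_atTop']
  intro ε hε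
  have hcont : ContinuousAt (fun y : H => ‖x - y‖ ^ 2 / 2) p := by fun_prop
  have hev := hcont.eventually (gt_mem_nhds
    (show ‖x - p‖ ^ 2 / 2 < ‖x - p‖ ^ 2 / 2 + ε ^ 2 / 16 by
      have : 0 < ε ^ 2 := by positivity
      linarith))
  obtain ⟨y, hy1, hyD⟩ := mem_closure_iff_nhds.1 hp _ hev
  have hy1 : ‖x - y‖ ^ 2 / 2 < ‖x - p‖ ^ 2 / 2 + ε ^ 2 / 16 := hy1
  set K := |(f y).toReal| + a + 2 * b ^ 2 with hK
  have hK0 : 0 ≤ K := by positivity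
  have hs : Tendsto (fun n => γ n * K) atTop (𝓝 (0 * K)) := hlim.mul_const K
  rw [zero_mul] at hs
  have e1 := hs.eventually (gt_mem_nhds (show 0 < ε ^ 2 / 16 by positivity))
  have e2 := hlim.eventually (gt_mem_nhds (show (0:ℝ) < 1 by norm_num))
  obtain ⟨N, hN⟩ := eventually_atTop.1 (e1.and e2)
  refine ⟨N, fun n hn => ?_⟩
  obtain ⟨h1, h2⟩ := hN n hn.le
  rcases (hγ n).eq_or_lt with h0 | h0
  · rw [← h0, ← hpdef, dist_self]; exact hε
  obtain ⟨hq, hqm⟩ := hp_pos hf x h0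
  set q := prox (rscale (γ n) f) x
  have i1 := hqm y hyD
  have i2 := hpm q (subset_closure hq)
  have i3 := hab q hq
  have i4 := le_abs_self (f y).toReal
  rw [dist_eq_norm]
  refine lt_of_pow_lt_pow_left₀ 2 hε.le ?_
  have i5 : 0 ≤ ‖y - q‖ ^ 2 / 4 := by positivity
  have i6 : (f y).toReal - (f q).toReal ≤ K + ‖q - p‖ ^ 2 / 8 := by
    nlinarith [sq_nonneg (‖q - p‖ / 4 - b), sq_nonneg (‖q - p‖ - 4 * b)]
  have i7 := mul_le_mul_of_nonneg_left i6 h0.le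
  have i8 : γ n * (‖q - p‖ ^ 2 / 8) ≤ 1 * (‖q - p‖ ^ 2 / 8) := by gcongr
  linarith

/-- Case `μ > 0`: convergence of the proximal points. -/
theorem hp_conv_pos [CompleteSpace H] {f : H → EReal} (hf : IsGamma0 f) (x : H) {μ : ℝ}
    (hμ : 0 < μ) (γ : ℕ → ℝ) (hlim : Tendsto γ atTop (𝓝 μ)) :
    Tendsto (fun n => prox (rscale (γ n) f) x) atTop (𝓝 (prox (rscale μ f) x)) := by
  obtain ⟨hp, hpm⟩ := hp_pos hf x hμ
  set p := prox (rscale μ f) x with hpdef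
  obtain ⟨a, b, ha, hb, hab⟩ := hp_minorant hf p
  rw [Metric.tendsto_atTop']
  intro ε hε
  set B := ‖x - p‖ ^ 2 / μ with hB
  have hB0 : 0 ≤ B := by positivity
  have hBμ : B * μ = ‖x - p‖ ^ 2 := by rw [hB]; field_simp
  set K := |(f p).toReal| + a + b ^ 2 + B with hK
  have hK0 : 0 ≤ K := by positivity
  have hs : Tendsto (fun n => |γ n - μ|) atTop (𝓝 0) := by
    simpa using (hlim.sub_const μ).abs
  have hs2 : Tendsto (fun n => |γ n - μ| * K) atTop (𝓝 (0 * K)) := hs.mul_const K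
  rw [zero_mul] at hs2
  have e1 := hs2.eventually (gt_mem_nhds (show 0 < ε ^ 2 / 16 by positivity))
  have e2 := hs.eventually (gt_mem_nhds (show (0:ℝ) < 1 by norm_num))
  have e3 := hlim.eventually (lt_mem_nhds (show μ / 2 < μ by linarith))
  obtain ⟨N, hN⟩ := eventually_atTop.1 (e1.and (e2.and e3))
  refine ⟨N, fun n hn => ?_⟩
  obtain ⟨h1, h2, h3⟩ := hN n hn.le
  have h0 : 0 < γ n := by linarith
  obtain ⟨hq, hqm⟩ := hp_pos hf x h0
  set q := prox (rscale (γ n) f) x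
  have i1 := hqm p hp
  have i2 := hpm q hq
  have i3 := hab q hq
  have i4 := le_abs_self (f p).toReal
  rw [dist_eq_norm]
  refine lt_of_pow_lt_pow_left₀ 2 hε.le ?_
  rw [norm_sub_rev p q] at i1
  have i5 : 0 ≤ ‖x - q‖ ^ 2 / 2 := by positivity
  have i5' : 0 ≤ ‖q - p‖ ^ 2 / 4 := by positivity
  have i6 : (f p).toReal - (f q).toReal ≤ K + ‖q - p‖ ^ 2 / 4 := by
    nlinarith [sq_nonneg (‖q - p‖ / 2 - b)]
  have i7 : (f q).toReal - (f p).toReal ≤ B := by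
    by_contra hcon
    push Not at hcon
    nlinarith
  have i8 : |(f p).toReal - (f q).toReal| ≤ K + ‖q - p‖ ^ 2 / 4 := by
    rw [abs_le]
    refine ⟨?_, i6⟩
    have : 0 ≤ |(f p).toReal| := abs_nonneg _
    nlinarith [sq_nonneg b]
  have i9 : ‖q - p‖ ^ 2 / 2 ≤ (γ n - μ) * ((f p).toReal - (f q).toReal) := by linarith
  have i10 := le_abs_self ((γ n - μ) * ((f p).toReal - (f q).toReal))
  rw [abs_mul] at i10
  have i11 := mul_le_mul_of_nonneg_left i8 (abs_nonneg (γ n - μ))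
  have i12 : |γ n - μ| * (‖q - p‖ ^ 2 / 4) ≤ 1 * (‖q - p‖ ^ 2 / 4) := by gcongr
  have : 0 < ε ^ 2 := by positivity
  linarith

end helpers

/-- Lemma 3.3(iii). `γ ↦ f(prox_{γ⊙f} x)` is continuous on `[0, +∞)`. -/
theorem stmt6 {H : Type*} [NormedAddCommGroup H] [InnerProductSpace ℝ H] [CompleteSpace H]
    (f : H → EReal) (hf : IsGamma0 f) (x : H) (μ : ℝ) (hμ : 0 ≤ μ)
    (γ : ℕ → ℝ) (hγ : ∀ n, 0 ≤ γ n) (hlim : Filter.Tendsto γ Filter.atTop (nhds μ)) :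
    Filter.Tendsto (fun n => f (prox (rscale (γ n) f) x)) Filter.atTop
      (nhds (f (prox (rscale μ f) x))) := by
  have hconv : Tendsto (fun n => prox (rscale (γ n) f) x) atTop (𝓝 (prox (rscale μ f) x)) := by
    rcases hμ.eq_or_lt with h | h
    · subst h; exact hp_conv_zero hf x γ hγ hlim
    · exact hp_conv_pos hf x h γ hlim
  rw [tendsto_order]
  refine ⟨fun d hd => hconv.eventually (hf.2.2.1 _ d hd), fun d hd => ?_⟩
  have hpD : prox (rscale μ f) x ∈ edom f := lt_of_lt_of_le hd le_top
  rcases hμ.eq_or_lt with h | h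
  · subst h
    refine Eventually.of_forall fun n => ?_
    rcases (hγ n).eq_or_lt with h0 | h0
    · rw [← h0]; exact hd
    refine lt_of_le_of_lt ?_ hd
    obtain ⟨hp, hpm⟩ := hp_zero hf x
    obtain ⟨hq, hqm⟩ := hp_pos hf x h0
    have i1 := hqm _ hpD
    have i2 := hpm _ (subset_closure hq)
    rw [hp_coe hf hq, hp_coe hf hpD]
    refine EReal.coe_le_coe_iff.2 (le_of_mul_le_mul_left ?_ h0)
    have := sq_nonneg ‖prox (rscale 0 f) x - prox (rscale (γ n) f) x‖
    have := sq_nonneg ‖prox (rscale (γ n) f) x - prox (rscale 0 f) x‖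
    linarith
  · set p := prox (rscale μ f) x with hpdef
    rw [hp_coe hf hpD] at hd
    obtain ⟨e, he1, he2⟩ := EReal.lt_iff_exists_real_btwn.1 hd
    have he1 := EReal.coe_lt_coe_iff.1 he1
    have h2 : Tendsto (fun n => (f p).toReal +
        (‖x - p‖ ^ 2 / 2 - ‖x - prox (rscale (γ n) f) x‖ ^ 2 / 2) / γ n) atTop
        (𝓝 ((f p).toReal + (‖x - p‖ ^ 2 / 2 - ‖x - p‖ ^ 2 / 2) / μ)) :=
      tendsto_const_nhds.add ((tendsto_const_nhds.sub
        (((tendsto_const_nhds.sub hconv).norm.pow 2).div_const 2)).div hlim h.ne')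
    rw [sub_self, zero_div, add_zero] at h2
    filter_upwards [h2.eventually (gt_mem_nhds he1), hlim.eventually (lt_mem_nhds h)] with n hn h0
    obtain ⟨hq, hqm⟩ := hp_pos hf x h0
    refine lt_of_le_of_lt ?_ he2
    rw [hp_coe hf hq]
    refine EReal.coe_le_coe_iff.2 (le_trans ?_ hn.le)
    have i1 := hqm _ hpD
    have := sq_nonneg ‖p - prox (rscale (γ n) f) x‖
    rw [← sub_le_iff_le_add', le_div_iff₀ h0]
    linarith
end

section
/- Let φ ∈ Γ₀(H) satisfy φ*(H) ⊂ {0,+∞}, let s: G → [−∞,+∞] be such that S = s⁻¹((0,+∞)) ≠ ∅, let x ∈ H, y ∈ G, and γ ∈ (0,+∞). Then prox_{γ(φ▷s)}(x,y) = ( prox_{γφ} x, proj_{cl conv S} y ), where cl conv S denotes the closed convex hull of S. -/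
open scoped Classical

lemma aux_mul_le {t : ℝ} (ht : 0 < t) (a : EReal) (b : ℝ) :
    (t : EReal) * a ≤ (b : EReal) ↔ a ≤ ((b / t : ℝ) : EReal) := by
  rw [EReal.coe_div, EReal.le_div_iff_mul_le (by exact_mod_cast ht) (EReal.coe_ne_top t), mul_comm]

lemma aux_eq {a b : EReal} (h : ∀ r : ℝ, a ≤ (r : EReal) ↔ b ≤ (r : EReal)) : a = b :=
  le_antisymm (EReal.le_of_forall_lt_iff_le.1 fun r hr => (h r).2 hr.le)
    (EReal.le_of_forall_lt_iff_le.1 fun r hr => (h r).1 hr.le)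

/-- The set of linear minorants. -/
def auxU {H : Type*} [NormedAddCommGroup H] [InnerProductSpace ℝ H] (φ : H → EReal) : Set H :=
  {u | ∀ (x : H) (r : ℝ), φ x ≤ (r : EReal) → inner ℝ x u ≤ r}

lemma auxU_closed {H : Type*} [NormedAddCommGroup H] [InnerProductSpace ℝ H] (φ : H → EReal) :
    IsClosed (auxU φ) := by
  simp only [auxU, Set.ofPred_forall]
  refine isClosed_iInter fun x => isClosed_iInter fun r => isClosed_iInter fun _ => ?_
  exact isClosed_le (by fun_prop) continuous_const

lemma auxU_convex {H : Type*} [NormedAddCommGroup H] [InnerProductSpace ℝ H] (φ : H → EReal) :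
    Convex ℝ (auxU φ) := by
  intro u hu v hv a b ha hb hab x r hr
  rw [inner_add_right, inner_smul_right, inner_smul_right]
  have h1 := mul_le_mul_of_nonneg_left (hu x r hr) ha
  have h2 := mul_le_mul_of_nonneg_left (hv x r hr) hb
  have : r = a * r + b * r := by rw [← add_mul, hab, one_mul]
  linarith

lemma aux_conj {H : Type*} [NormedAddCommGroup H] [InnerProductSpace ℝ H] (φ : H → EReal)
    (hb : ∀ x, φ x ≠ ⊥) (hc : ∀ u : H, fconj φ u = 0 ∨ fconj φ u = ⊤) (w : H) (k : ℝ)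
    (h : ∀ (x : H) (r : ℝ), φ x ≤ (r : EReal) → inner ℝ x w - r ≤ k) :
    w ∈ auxU φ ∧ 0 ≤ k := by
  have h1 : fconj φ w ≤ (k : EReal) := by
    refine iSup_le fun x => ?_
    have hbx := hb x
    have hx := h x
    generalize φ x = a at hbx hx
    induction a with
    | bot => exact absurd rfl hbx
    | top => simp
    | coe r =>
      rw [← EReal.coe_sub]
      exact EReal.coe_le_coe_iff.2 (hx r le_rfl)
  have h0 : fconj φ w = 0 := by
    rcases hc w with h | h
    · exact h
    · rw [h] at h1
      exact absurd (top_le_iff.1 h1) (EReal.coe_ne_top k)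
  refine ⟨fun x r hr => ?_, ?_⟩
  · have h2 : ((inner ℝ x w : ℝ) : EReal) - φ x ≤ 0 := by
      rw [← h0]; exact le_iSup (fun x => ((inner ℝ x w : ℝ) : EReal) - φ x) x
    have hbx := hb x
    generalize φ x = a at hbx h2 hr
    induction a with
    | bot => exact absurd rfl hbx
    | top => exact absurd (top_le_iff.1 hr) (EReal.coe_ne_top r)
    | coe b =>
      rw [← EReal.coe_sub] at h2
      have h3 : inner ℝ x w - b ≤ 0 := by exact_mod_cast h2
      have h4 : b ≤ r := by exact_mod_cast hr
      linarith
  · rw [h0] at h1; exact_mod_cast h1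

/-- Separation of a point from the epigraph. -/
lemma aux_sep {H : Type*} [NormedAddCommGroup H] [InnerProductSpace ℝ H] [CompleteSpace H]
    (φ : H → EReal) (hφ : IsGamma0 φ) (x0 : H) (r0 : ℝ) (h : ¬ φ x0 ≤ (r0 : EReal)) :
    ∃ (w : H) (c k : ℝ), c ≤ 0 ∧ (∀ (x : H) (r : ℝ), φ x ≤ (r : EReal) → inner ℝ x w + c * r < k)
      ∧ k < inner ℝ x0 w + c * r0 := by
  obtain ⟨⟨x1, hx1⟩, hb, hl, hcv⟩ := hφ
  have hcl : IsClosed {p : H × ℝ | φ p.1 ≤ (p.2 : EReal)} := by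
    have := hl.isClosed_epigraph
    exact this.preimage (f := fun p : H × ℝ => (p.1, (p.2 : EReal)))
      (continuous_fst.prodMk (continuous_coe_real_ereal.comp continuous_snd))
  obtain ⟨f, k, hf, hk⟩ := geometric_hahn_banach_closed_point (x := (x0, r0)) hcv hcl h
  set w := (InnerProductSpace.toDual ℝ H).symm (f.comp (ContinuousLinearMap.inl ℝ H ℝ)) with hw
  have hfe : ∀ (x : H) (r : ℝ), f (x, r) = inner ℝ x w + f (0, 1) * r := by
    intro x r
    rw [real_inner_comm, hw, InnerProductSpace.toDual_symm_apply]
    have : (x, r) = ContinuousLinearMap.inl ℝ H ℝ x + r • ((0, 1) : H × ℝ) := by simp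
    rw [this, map_add, map_smul, smul_eq_mul, mul_comm]
    rfl
  refine ⟨w, f (0, 1), k, ?_, fun x r hr => ?_, ?_⟩
  · by_contra hc
    push Not at hc
    obtain ⟨r1, hr1⟩ : ∃ r1 : ℝ, φ x1 ≤ (r1 : EReal) :=
      ⟨(φ x1).toReal, EReal.le_coe_toReal hx1⟩
    set c := f (0, 1)
    set r := max r1 ((k - inner ℝ x1 w) / c) with hr
    have h1 := hf (x1, r) (hr1.trans (by exact_mod_cast le_max_left _ _))
    rw [hfe] at h1
    have h2 : (k - inner ℝ x1 w) / c ≤ r := le_max_right _ _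
    rw [div_le_iff₀ hc] at h2
    linarith [mul_comm r c]
  · rw [← hfe]; exact hf (x, r) hr
  · rw [← hfe]; exact hk

lemma aux_sep_neg {H : Type*} [NormedAddCommGroup H] [InnerProductSpace ℝ H]
    (φ : H → EReal) (hb : ∀ x, φ x ≠ ⊥) (hc : ∀ u : H, fconj φ u = 0 ∨ fconj φ u = ⊤)
    (x0 : H) (r0 : ℝ) (w : H) (c k : ℝ) (hc0 : c < 0)
    (h1 : ∀ (x : H) (r : ℝ), φ x ≤ (r : EReal) → inner ℝ x w + c * r < k)
    (h2 : k < inner ℝ x0 w + c * r0) : ∃ u ∈ auxU φ, r0 < inner ℝ x0 u := by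
  have hd : 0 < -c := by linarith
  obtain ⟨hu, hk⟩ := aux_conj φ hb hc ((-c)⁻¹ • w) (k / (-c)) (fun x r hr => by
    rw [inner_smul_right, le_div_iff₀ hd, sub_mul, mul_right_comm, inv_mul_cancel₀ hd.ne']
    linarith [h1 x r hr, mul_comm r c])
  refine ⟨_, hu, ?_⟩
  have hk' : 0 ≤ k := by
    have := mul_nonneg hk hd.le
    rwa [div_mul_cancel₀ _ hd.ne'] at this
  rw [inner_smul_right, inv_mul_eq_div, lt_div_iff₀ hd]
  linarith [mul_comm r0 c]

lemma auxU_nonempty {H : Type*} [NormedAddCommGroup H] [InnerProductSpace ℝ H] [CompleteSpace H]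
    (φ : H → EReal) (hφ : IsGamma0 φ) (hc : ∀ u : H, fconj φ u = 0 ∨ fconj φ u = ⊤) :
    (auxU φ).Nonempty := by
  obtain ⟨x1, hx1⟩ := hφ.1
  have hb := hφ.2.1
  have he : φ x1 = ((φ x1).toReal : EReal) := (EReal.coe_toReal hx1 (hb x1)).symm
  obtain ⟨w, c, k, hc0, h1, h2⟩ := aux_sep φ hφ x1 ((φ x1).toReal - 1) (by
    rw [he, EReal.coe_le_coe_iff, EReal.toReal_coe]; linarith)
  have h3 := h1 x1 _ he.le
  have hc1 : c < 0 := by linarith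
  obtain ⟨u, hu, _⟩ := aux_sep_neg φ hb hc x1 _ w c k hc1 h1 h2
  exact ⟨u, hu⟩

/-- `φ` is the support function of `auxU φ`. -/
lemma aux_support {H : Type*} [NormedAddCommGroup H] [InnerProductSpace ℝ H] [CompleteSpace H]
    (φ : H → EReal) (hφ : IsGamma0 φ) (hc : ∀ u : H, fconj φ u = 0 ∨ fconj φ u = ⊤)
    (x : H) (r : ℝ) : φ x ≤ (r : EReal) ↔ ∀ u ∈ auxU φ, inner ℝ x u ≤ r := by
  refine ⟨fun h u hu => hu x r h, fun h => ?_⟩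
  by_contra hn
  have hb := hφ.2.1
  obtain ⟨w, c, k, hc0, h1, h2⟩ := aux_sep φ hφ x r hn
  rcases hc0.lt_or_eq with hc1 | hc1
  · obtain ⟨u, hu, hlt⟩ := aux_sep_neg φ hb hc x r w c k hc1 h1 h2
    linarith [h u hu]
  · subst hc1
    simp only [zero_mul, add_zero] at h1 h2
    obtain ⟨u, hu⟩ := auxU_nonempty φ hφ hc
    have key : ∀ l : ℝ, 0 ≤ l → u + l • w ∈ auxU φ ∧ 0 ≤ l * k := fun l hl =>
      aux_conj φ hb hc _ _ (fun z r hr => by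
        rw [inner_add_right, inner_smul_right]
        have := mul_le_mul_of_nonneg_left (h1 z r hr).le hl
        linarith [hu z r hr])
    have hk : 0 ≤ k := by simpa using (key 1 zero_le_one).2
    have hpos : 0 < inner ℝ x w := by linarith
    set l := max 0 ((r + 1 - inner ℝ x u) / inner ℝ x w) with hl
    have h3 := h _ (key l (le_max_left _ _)).1
    have h4 : (r + 1 - inner ℝ x u) / inner ℝ x w ≤ l := le_max_right _ _
    rw [div_le_iff₀ hpos] at h4
    rw [inner_add_right, inner_smul_right] at h3
    linarith

lemma aux_hom {H : Type*} [NormedAddCommGroup H] [InnerProductSpace ℝ H] [CompleteSpace H]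
    (φ : H → EReal) (hφ : IsGamma0 φ) (hc : ∀ u : H, fconj φ u = 0 ∨ fconj φ u = ⊤)
    (x : H) (t : ℝ) (ht : 0 < t) : (t : EReal) * φ (t⁻¹ • x) = φ x := by
  refine aux_eq fun r => ?_
  rw [aux_mul_le ht, aux_support φ hφ hc, aux_support φ hφ hc]
  refine forall₂_congr fun u _ => ?_
  rw [real_inner_smul_left, inv_mul_eq_div, div_le_div_iff_of_pos_right ht]

/-- The explicit form of the perspective. -/
lemma aux_persp {H G : Type*} [NormedAddCommGroup H] [InnerProductSpace ℝ H] [CompleteSpace H]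
    [NormedAddCommGroup G] [InnerProductSpace ℝ G]
    (φ : H → EReal) (s : G → EReal) (hφ : IsGamma0 φ)
    (hc : ∀ u : H, fconj φ u = 0 ∨ fconj φ u = ⊤) (q : WithLp 2 (H × G)) :
    persp φ s q = if q.snd ∈ closure (convexHull ℝ (sdom s)) then φ q.fst else ⊤ := by
  have hpre : ∀ q : WithLp 2 (H × G), prePersp φ s q = if q.snd ∈ sdom s then φ q.fst else ⊤ := by
    intro q
    have h0 : prePersp φ s q = if 0 < s q.snd ∧ s q.snd < ⊤ then
      s q.snd * φ ((s q.snd).toReal⁻¹ • q.fst) else ⊤ := rfl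
    rw [h0]
    by_cases h : 0 < s q.snd ∧ s q.snd < ⊤
    · have h' : q.snd ∈ sdom s := h
      rw [if_pos h, if_pos h']
      have hne : s q.snd ≠ ⊥ := (lt_of_le_of_lt bot_le h.1).ne'
      have he := EReal.coe_toReal h.2.ne hne
      have hp : 0 < (s q.snd).toReal := EReal.toReal_pos h.1 h.2.ne
      conv_lhs => rw [← he]
      rw [EReal.toReal_coe]
      exact aux_hom φ hφ hc _ _ hp
    · have h' : q.snd ∉ sdom s := h
      rw [if_neg h, if_neg h']
  set D := closure (convexHull ℝ (sdom s)) with hD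
  have hDc : Convex ℝ D := (convex_convexHull ℝ _).closure
  have hSD : sdom s ⊆ D := (subset_convexHull ℝ _).trans subset_closure
  apply le_antisymm
  · refine sSup_le ?_
    rintro t ⟨g, hgl, hgc, hgp, rfl⟩
    split_ifs with h
    · refine EReal.le_of_forall_lt_iff_le.1 fun r hr => ?_
      set A : Set G := {v | g (WithLp.toLp 2 (q.fst, v)) ≤ (r : EReal)} with hA
      have hAc : IsClosed A := (hgl.isClosed_preimage (r : EReal)).preimage
        ((WithLp.prod_continuous_toLp 2 H G).comp (continuous_const.prodMk continuous_id))
      have hAcv : Convex ℝ A := by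
        intro u hu v hv a b ha hb hab
        have := hgc (x := (WithLp.toLp 2 (q.fst, u), r)) hu
          (y := (WithLp.toLp 2 (q.fst, v), r)) hv ha hb hab
        have h2 : a • ((WithLp.toLp 2 (q.fst, u), r) : WithLp 2 (H × G) × ℝ)
            + b • ((WithLp.toLp 2 (q.fst, v), r) : WithLp 2 (H × G) × ℝ)
            = (WithLp.toLp 2 (q.fst, a • u + b • v), r) := by
          rw [Prod.smul_mk, Prod.smul_mk, Prod.mk_add_mk, ← add_smul, hab, one_smul,
            ← WithLp.toLp_smul, ← WithLp.toLp_smul, ← WithLp.toLp_add, Prod.smul_mk, Prod.smul_mk,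
            Prod.mk_add_mk, ← add_smul, hab, one_smul]
        rw [h2] at this
        exact this
      have hSA : sdom s ⊆ A := by
        intro v hv
        refine (hgp _).trans ?_
        rw [hpre]
        change (if v ∈ sdom s then φ q.fst else ⊤) ≤ _
        rw [if_pos hv]
        exact hr.le
      exact closure_minimal (convexHull_min hSA hAcv) hAc h
    · exact le_top
  · refine le_sSup ⟨fun q => if q.snd ∈ D then φ q.fst else ⊤, ?_, ?_, ?_, rfl⟩
    · rw [lowerSemicontinuous_iff_isClosed_preimage]
      intro a
      by_cases ha : a = ⊤
      · subst ha; simp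
      · have : (fun q : WithLp 2 (H × G) => if q.snd ∈ D then φ q.fst else ⊤) ⁻¹' Set.Iic a
            = WithLp.snd ⁻¹' D ∩ WithLp.fst ⁻¹' (φ ⁻¹' Set.Iic a) := by
          ext q
          by_cases h : q.snd ∈ D <;> simp [h, ha]
        rw [this]
        exact (isClosed_closure.preimage (WithLp.continuous_snd 2 H G)).inter
          ((hφ.2.2.1.isClosed_preimage a).preimage (WithLp.continuous_fst 2 H G))
    · have hiff : ∀ (q : WithLp 2 (H × G)) (r : ℝ),
          (if q.snd ∈ D then φ q.fst else ⊤) ≤ (r : EReal) ↔ q.snd ∈ D ∧ φ q.fst ≤ (r : EReal) := by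
        intro q r
        by_cases h : q.snd ∈ D <;> simp [h]
      rintro ⟨u, r⟩ hu ⟨v, t⟩ hv a b ha hb hab
      simp only [Set.mem_ofPred_eq, hiff] at hu hv ⊢
      exact ⟨hDc hu.1 hv.1 ha hb hab,
        hφ.2.2.2 (x := (u.fst, r)) hu.2 (y := (v.fst, t)) hv.2 ha hb hab⟩
    · intro q
      rw [hpre]
      by_cases h : q.snd ∈ sdom s
      · simp [h, hSD h]
      · simp [h]

lemma aux_prox {E : Type*} [NormedAddCommGroup E] [InnerProductSpace ℝ E]
    (f : E → EReal) (x p : E) (a : ℝ) (ha : f p = (a : EReal))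
    (h : ∀ (z : E) (b : ℝ), f z ≤ (b : EReal) →
      a + ‖x - p‖ ^ 2 / 2 + ‖z - p‖ ^ 2 / 2 ≤ b + ‖x - z‖ ^ 2 / 2) :
    prox f x = p := by
  have hmin : ∀ y, f p + ((‖x - p‖ ^ 2 / 2 : ℝ) : EReal) ≤ f y + ((‖x - y‖ ^ 2 / 2 : ℝ) : EReal) := by
    intro z
    rw [ha]
    have hz := h z
    generalize f z = c at hz
    induction c with
    | top => simp
    | bot =>
      have := hz (a + ‖x - p‖ ^ 2 / 2 + ‖z - p‖ ^ 2 / 2 - ‖x - z‖ ^ 2 / 2 - 1) bot_le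
      linarith
    | coe b =>
      have := hz b le_rfl
      have h2 : 0 ≤ ‖z - p‖ ^ 2 / 2 := by positivity
      rw [← EReal.coe_add, ← EReal.coe_add, EReal.coe_le_coe_iff]
      linarith
  have hs := Classical.epsilon_spec (p := fun p => ∀ y, f p + ((‖x - p‖ ^ 2 / 2 : ℝ) : EReal) ≤
    f y + ((‖x - y‖ ^ 2 / 2 : ℝ) : EReal)) ⟨p, hmin⟩
  change ∀ y, f (prox f x) + ((‖x - prox f x‖ ^ 2 / 2 : ℝ) : EReal) ≤
    f y + ((‖x - y‖ ^ 2 / 2 : ℝ) : EReal) at hs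
  generalize prox f x = z at hs
  have hp := hs p
  rw [ha] at hp
  have hz := h z
  generalize f z = c at hz hp
  induction c with
  | top =>
    rw [EReal.top_add_coe, ← EReal.coe_add] at hp
    exact absurd (top_le_iff.1 hp) (EReal.coe_ne_top _)
  | bot =>
    have := hz (a + ‖x - p‖ ^ 2 / 2 + ‖z - p‖ ^ 2 / 2 - ‖x - z‖ ^ 2 / 2 - 1) bot_le
    linarith
  | coe b =>
    have := hz b le_rfl
    rw [← EReal.coe_add, ← EReal.coe_add, EReal.coe_le_coe_iff] at hp
    have h2 : ‖z - p‖ ^ 2 = 0 := le_antisymm (by linarith) (by positivity)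
    exact sub_eq_zero.1 (norm_eq_zero.1 (pow_eq_zero_iff two_ne_zero |>.1 h2))

lemma aux_proj_exists {E : Type*} [NormedAddCommGroup E] [InnerProductSpace ℝ E] [CompleteSpace E]
    (C : Set E) (hne : C.Nonempty) (hcl : IsClosed C) (hcv : Convex ℝ C) (x : E) :
    ∃ p ∈ C, ∀ z ∈ C, inner ℝ (x - p) (z - p) ≤ 0 := by
  obtain ⟨p, hp, h⟩ := exists_norm_eq_iInf_of_complete_convex hne hcl.isComplete hcv x
  exact ⟨p, hp, (norm_eq_iInf_iff_real_inner_le_zero hcv hp).1 h⟩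

lemma aux_proj_ineq {E : Type*} [NormedAddCommGroup E] [InnerProductSpace ℝ E] (x p z : E) :
    ‖x - z‖ ^ 2 = ‖x - p‖ ^ 2 - 2 * inner ℝ (x - p) (z - p) + ‖z - p‖ ^ 2 := by
  rw [← norm_sub_sq_real, sub_sub_sub_cancel_right]

lemma aux_proj {E : Type*} [NormedAddCommGroup E] [InnerProductSpace ℝ E]
    (C : Set E) (x p : E) (hp : p ∈ C) (h : ∀ z ∈ C, inner ℝ (x - p) (z - p) ≤ 0) :
    projC C x = p := by
  have hmin : p ∈ C ∧ ∀ y ∈ C, ‖x - p‖ ≤ ‖x - y‖ := by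
    refine ⟨hp, fun z hz => ?_⟩
    refine le_of_sq_le_sq ?_ (norm_nonneg _)
    have := h z hz
    rw [aux_proj_ineq x p z]
    nlinarith [sq_nonneg ‖z - p‖]
  have hs := Classical.epsilon_spec (p := fun p => p ∈ C ∧ ∀ y ∈ C, ‖x - p‖ ≤ ‖x - y‖) ⟨p, hmin⟩
  change projC C x ∈ C ∧ ∀ y ∈ C, ‖x - projC C x‖ ≤ ‖x - y‖ at hs
  generalize projC C x = z at hs
  have h1 := pow_le_pow_left₀ (norm_nonneg _) (hs.2 p hp) 2
  rw [aux_proj_ineq x p z] at h1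
  have h2 : ‖z - p‖ ^ 2 = 0 := le_antisymm (by linarith [h z hs.1]) (by positivity)
  exact sub_eq_zero.1 (norm_eq_zero.1 (pow_eq_zero_iff two_ne_zero |>.1 h2))

/-- Theorem 4.1(ii). -/
theorem stmt8 {H G : Type*} [NormedAddCommGroup H] [InnerProductSpace ℝ H] [CompleteSpace H]
    [NormedAddCommGroup G] [InnerProductSpace ℝ G] [CompleteSpace G]
    (φ : H → EReal) (s : G → EReal) (hφ : IsGamma0 φ)
    (hc : ∀ u : H, fconj φ u = 0 ∨ fconj φ u = ⊤)
    (hS : ∃ v : G, 0 < s v ∧ s v < ⊤)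
    (x : H) (y : G) (γ : ℝ) (hγ : 0 < γ) :
    prox (smulE γ (persp φ s)) (pairHG x y) =
      pairHG (prox (smulE γ φ) x)
        (projC (closure (convexHull ℝ (sdom s))) y) := by
  obtain ⟨v, hv, hvp⟩ := aux_proj_exists (auxU φ) (auxU_nonempty φ hφ hc) (auxU_closed φ)
    (auxU_convex φ) (γ⁻¹ • x)
  set D := closure (convexHull ℝ (sdom s)) with hD
  obtain ⟨q, hq, hqp⟩ := aux_proj_exists D
    (by obtain ⟨w, hw⟩ := hS; exact ⟨w, subset_closure (subset_convexHull ℝ _ hw)⟩)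
    isClosed_closure (convex_convexHull ℝ _).closure y
  obtain ⟨p, hp⟩ : ∃ p, p = x - γ • v := ⟨_, rfl⟩
  have hxp : x - p = γ • v := by rw [hp]; abel
  have hp2 : p = γ • (γ⁻¹ • x - v) := by rw [smul_sub, smul_inv_smul₀ hγ.ne', hp]
  have hφp : φ p = ((inner ℝ p v : ℝ) : EReal) := by
    refine aux_eq fun r => ?_
    rw [aux_support φ hφ hc, EReal.coe_le_coe_iff]
    refine ⟨fun h => h v hv, fun h u hu => le_trans ?_ h⟩
    have h1 := mul_nonpos_of_nonneg_of_nonpos hγ.le (hvp u hu)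
    rw [← real_inner_smul_left, ← hp2, inner_sub_right] at h1
    linarith
  have hgp : smulE γ φ p = ((γ * inner ℝ p v : ℝ) : EReal) := by
    rw [smulE, hφp, EReal.coe_mul]
  have hmain : ∀ (z : H) (b : ℝ), smulE γ φ z ≤ (b : EReal) →
      γ * inner ℝ p v + ‖x - p‖ ^ 2 / 2 + ‖z - p‖ ^ 2 / 2 ≤ b + ‖x - z‖ ^ 2 / 2 := by
    intro z b hz
    rw [smulE, aux_mul_le hγ] at hz
    have h1 := hv z _ hz
    rw [le_div_iff₀ hγ] at h1
    rw [aux_proj_ineq x p z, hxp, real_inner_smul_left, inner_sub_right, real_inner_comm v z,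
      real_inner_comm v p] at *
    linarith
  rw [aux_prox (smulE γ φ) x p _ hgp hmain, aux_proj D y q hq hqp]
  refine aux_prox _ _ _ (γ * inner ℝ p v) ?_ fun z b hz => ?_
  · rw [smulE, aux_persp φ s hφ hc]
    change (γ : EReal) * (if q ∈ D then φ p else ⊤) = _
    rw [if_pos hq]
    exact hgp
  · rw [smulE, aux_persp φ s hφ hc] at hz
    by_cases hzD : z.snd ∈ D
    · rw [if_pos hzD] at hz
      have h1 := hmain z.fst b hz
      have h2 := aux_proj_ineq y q z.snd
      have h3 := hqp _ hzD
      rw [WithLp.prod_norm_sq_eq_of_L2, WithLp.prod_norm_sq_eq_of_L2, WithLp.prod_norm_sq_eq_of_L2]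
      change γ * inner ℝ p v + (‖x - p‖ ^ 2 + ‖y - q‖ ^ 2) / 2
        + (‖z.fst - p‖ ^ 2 + ‖z.snd - q‖ ^ 2) / 2
        ≤ b + (‖x - z.fst‖ ^ 2 + ‖y - z.snd‖ ^ 2) / 2
      linarith
    · rw [if_neg hzD, EReal.coe_mul_top_of_pos hγ] at hz
      exact absurd (top_le_iff.1 hz) (EReal.coe_ne_top b)
end

section
/- Let φ ∈ Γ₀(H) satisfy φ*(H) ⊂ [0,+∞] and (φ*)⁻¹((0,+∞)) ≠ ∅, let s: G → [−∞,+∞] be such that −s ∈ Γ₀(G) and S = s⁻¹((0,+∞)) ≠ ∅, let γ ∈ (0,+∞), and let (x,y) ∈ Ω₁. Then the unique η ∈ [0,+∞) satisfying (−s)_▽( prox_{(γ·φ*(prox_{(η/γ)⊙φ*}(x/γ)))⊙(−s)_▽} y ) + η = 0 equals 0, and prox_{γ(φ▷s)}(x,y) = ( x − γ·proj_{cl dom φ*}(x/γ), proj_{cl S} y ). -/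
open scoped Classical

noncomputable section

/-- `Ω₁` of Proposition 4.2. -/
def Omega1 {H G : Type*} [NormedAddCommGroup H] [InnerProductSpace ℝ H]
    [NormedAddCommGroup G] [InnerProductSpace ℝ G]
    (φ : H → EReal) (s : G → EReal) (γ : ℝ) : Set (H × G) :=
  {p | fconj φ (projC (closure (edom (fconj φ))) (γ⁻¹ • p.1)) = 0 ∧
       s (projC (closure (sdom s)) p.2) = 0}

/-- `Ω₂` of Proposition 4.2. -/
def Omega2 {H G : Type*} [NormedAddCommGroup H] [InnerProductSpace ℝ H]
    [NormedAddCommGroup G] [InnerProductSpace ℝ G]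
    (φ : H → EReal) (s : G → EReal) (γ : ℝ) : Set (H × G) :=
  {p | (0 < fconj φ (projC (closure (edom (fconj φ))) (γ⁻¹ • p.1)) ∧
        fconj φ (projC (closure (edom (fconj φ))) (γ⁻¹ • p.1)) < ⊤) ∧
       s (prox (smulE (γ * (fconj φ (projC (closure (edom (fconj φ))) (γ⁻¹ • p.1))).toReal)
            (basEnv fun v => -(s v))) p.2) = 0}

/-- `Ω₃` of Proposition 4.2. -/
def Omega3 {H G : Type*} [NormedAddCommGroup H] [InnerProductSpace ℝ H]
    [NormedAddCommGroup G] [InnerProductSpace ℝ G]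
    (φ : H → EReal) (s : G → EReal) (γ : ℝ) : Set (H × G) :=
  {p | fconj φ (prox (smulE ((s (projC (closure (sdom s)) p.2)).toReal / γ) (fconj φ))
          (γ⁻¹ • p.1)) = 0 ∧
       0 < s (projC (closure (sdom s)) p.2) ∧ s (projC (closure (sdom s)) p.2) < ⊤}

/-- The equation (4.2) for `η` in Theorem 4.1(i). -/
def eta7eq {H G : Type*} [NormedAddCommGroup H] [InnerProductSpace ℝ H]
    [NormedAddCommGroup G] [InnerProductSpace ℝ G]
    (φ : H → EReal) (s : G → EReal) (γ : ℝ) (x : H) (y : G) (η : ℝ) : Prop :=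
  basEnv (fun v => -(s v))
      (prox (rscale (γ * (fconj φ (prox (rscale (η / γ) (fconj φ)) (γ⁻¹ • x))).toReal)
        (basEnv fun v => -(s v))) y) + (η : EReal) = 0

end

section Helpers

variable {E : Type*} [NormedAddCommGroup E] [InnerProductSpace ℝ E]

/-- `x ↦ ⟪x, w⟫ + c` is an affine minorant of `f`. -/
def AffMin (f : E → EReal) (w : E) (c : ℝ) : Prop :=
  ∀ x, ((inner ℝ x w + c : ℝ) : EReal) ≤ f x

lemma AffMin.fconj_le {f : E → EReal} {w : E} {c : ℝ} (h : AffMin f w c) :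
    fconj f w ≤ ((-c : ℝ) : EReal) := by
  unfold fconj
  refine iSup_le fun x => ?_
  have hx := h x
  induction hfx : f x with
  | bot => rw [hfx] at hx; exact absurd hx (by simp)
  | top => simp
  | coe t =>
    rw [hfx] at hx
    have := EReal.coe_le_coe_iff.1 hx
    rw [← EReal.coe_sub]
    exact EReal.coe_le_coe_iff.2 (by linarith)

lemma AffMin.of_fconj_le {f : E → EReal} {w : E} {c : ℝ}
    (h : fconj f w ≤ ((-c : ℝ) : EReal)) : AffMin f w c := by
  intro x
  have hx : ((inner ℝ x w : ℝ) : EReal) - f x ≤ ((-c : ℝ) : EReal) :=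
    (le_iSup (fun x => ((inner ℝ x w : ℝ) : EReal) - f x) x).trans h
  induction hfx : f x with
  | bot => rw [hfx] at hx; simp at hx
  | top => simp
  | coe t =>
    rw [hfx, ← EReal.coe_sub] at hx
    have := EReal.coe_le_coe_iff.1 hx
    exact EReal.coe_le_coe_iff.2 (by linarith)

lemma AffMin.of_fconj_lt_top {f : E → EReal} {w : E}
    (h : fconj f w < ⊤) : ∃ c, AffMin f w c := by
  obtain ⟨r, hr, -⟩ := EReal.lt_iff_exists_real_btwn.1 h
  exact ⟨-r, AffMin.of_fconj_le (by simpa using hr.le)⟩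

lemma AffMin.le_biconj {f : E → EReal} {w : E} {c : ℝ} (h : AffMin f w c) (a : E) :
    ((inner ℝ a w + c : ℝ) : EReal) ≤ fconj (fconj f) a := by
  refine le_trans ?_ (le_iSup (fun x => ((inner ℝ x a : ℝ) : EReal) - fconj f x) w)
  have h1 := h.fconj_le
  have : ((inner ℝ w a : ℝ) : EReal) - ((-c : ℝ) : EReal) ≤
      ((inner ℝ w a : ℝ) : EReal) - fconj f w := EReal.sub_le_sub le_rfl h1
  refine le_trans (le_of_eq ?_) this
  rw [← EReal.coe_sub, real_inner_comm, sub_neg_eq_add]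

lemma AffMin.mono {f g : E → EReal} {w : E} {c : ℝ} (h : AffMin f w c) (hfg : ∀ x, f x ≤ g x) :
    AffMin g w c := fun x => (h x).trans (hfg x)

lemma le_pbas (f : E → EReal) (x : E) : f x ≤ pbas f x := by
  unfold pbas; split_ifs <;> simp

lemma edom_fconj_convex (f : E → EReal) : Convex ℝ (edom (fconj f)) := by
  intro u hu v hv a b ha hb hab
  obtain ⟨c, hc⟩ := AffMin.of_fconj_lt_top hu
  obtain ⟨d, hd⟩ := AffMin.of_fconj_lt_top hv
  have : AffMin f (a • u + b • v) (a * c + b * d) := by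
    intro x
    have h1 := hc x
    have h2 := hd x
    induction hfx : f x with
    | bot => rw [hfx] at h1; exact absurd h1 (by simp)
    | top => simp
    | coe t =>
      rw [hfx] at h1 h2
      have h1 := EReal.coe_le_coe_iff.1 h1
      have h2 := EReal.coe_le_coe_iff.1 h2
      refine EReal.coe_le_coe_iff.2 ?_
      rw [inner_add_right, inner_smul_right, inner_smul_right]
      have e1 := mul_le_mul_of_nonneg_left h1 ha
      have e2 := mul_le_mul_of_nonneg_left h2 hb
      have : a * t + b * t = t := by rw [← add_mul, hab, one_mul]
      nlinarith
  exact lt_of_le_of_lt this.fconj_le (EReal.coe_lt_top _)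

lemma prox_eq_of_subgrad (f : E → EReal) (x p : E) (α : ℝ) (hp : f p = α)
    (h : ∀ y, ((α + inner ℝ (x - p) (y - p) : ℝ) : EReal) ≤ f y) : prox f x = p := by
  have key : ∀ y, ‖x - y‖ ^ 2 = ‖x - p‖ ^ 2 - 2 * inner ℝ (x - p) (y - p) + ‖y - p‖ ^ 2 := by
    intro y
    rw [← norm_sub_sq_real]; congr 2; abel
  have hmin : ∀ y, f p + ((‖x - p‖ ^ 2 / 2 : ℝ) : EReal) ≤
      f y + ((‖x - y‖ ^ 2 / 2 : ℝ) : EReal) := by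
    intro y
    refine le_trans ?_ (add_le_add_left (h y) _)
    rw [hp, ← EReal.coe_add, ← EReal.coe_add, EReal.coe_le_coe_iff, key y]
    nlinarith [sq_nonneg ‖y - p‖]
  have hε := Classical.epsilon_spec (p := fun p => ∀ y, f p + ((‖x - p‖ ^ 2 / 2 : ℝ) : EReal) ≤
    f y + ((‖x - y‖ ^ 2 / 2 : ℝ) : EReal)) ⟨p, hmin⟩
  change ∀ y, f (prox f x) + ((‖x - prox f x‖ ^ 2 / 2 : ℝ) : EReal) ≤
    f y + ((‖x - y‖ ^ 2 / 2 : ℝ) : EReal) at hε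
  set p' := prox f x
  have h1 := (add_le_add_left (h p') ((‖x - p'‖ ^ 2 / 2 : ℝ) : EReal)).trans (hε p)
  rw [hp, ← EReal.coe_add, ← EReal.coe_add, EReal.coe_le_coe_iff, key p'] at h1
  have h2 : ‖p' - p‖ ^ 2 ≤ 0 := by linarith
  have h3 : ‖p' - p‖ = 0 := by
    have := sq_nonneg ‖p' - p‖
    exact pow_eq_zero_iff (two_ne_zero) |>.1 (le_antisymm h2 this)
  exact sub_eq_zero.1 (norm_eq_zero.1 h3)

lemma projC_spec [CompleteSpace E] {C : Set E} (hne : C.Nonempty) (hcl : IsClosed C)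
    (hcv : Convex ℝ C) (x : E) :
    projC C x ∈ C ∧ ∀ w ∈ C, inner ℝ (x - projC C x) (w - projC C x) ≤ 0 := by
  obtain ⟨v, hv, hv2⟩ := exists_norm_eq_iInf_of_complete_convex hne hcl.isComplete hcv x
  have hbd : BddBelow (Set.range fun w : C => ‖x - w‖) :=
    ⟨0, by rintro _ ⟨w, rfl⟩; exact norm_nonneg _⟩
  have hex : ∃ p, p ∈ C ∧ ∀ y ∈ C, ‖x - p‖ ≤ ‖x - y‖ :=
    ⟨v, hv, fun y hy => hv2 ▸ ciInf_le hbd ⟨y, hy⟩⟩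
  have hε : projC C x ∈ C ∧ ∀ y ∈ C, ‖x - projC C x‖ ≤ ‖x - y‖ := Classical.epsilon_spec hex
  refine ⟨hε.1, ?_⟩
  refine (norm_eq_iInf_iff_real_inner_le_zero hcv hε.1).1 ?_
  haveI : Nonempty C := ⟨⟨v, hv⟩⟩
  exact le_antisymm (le_ciInf fun w => hε.2 w w.2) (ciInf_le hbd ⟨_, hε.1⟩)

/-- Separation of a point below the graph from the epigraph. -/
lemma gamma0_sep {f : E → EReal} (hf : IsGamma0 f) {a : E} {r : ℝ} (h : (r : EReal) < f a) :
    ∃ (l : E →L[ℝ] ℝ) (β u : ℝ), 0 ≤ β ∧ l a + β * r < u ∧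
      ∀ (x : E) (t : ℝ), f x ≤ t → u < l x + β * t := by
  obtain ⟨⟨x0, hx0⟩, hbot, hlsc, hcv⟩ := hf
  have hclosed : IsClosed {p : E × ℝ | f p.1 ≤ (p.2 : EReal)} := by
    have := hlsc.isClosed_epigraph
    exact this.preimage (f := fun p : E × ℝ => (p.1, (p.2 : EReal)))
      (continuous_fst.prodMk (continuous_coe_real_ereal.comp continuous_snd))
  obtain ⟨L, u, h1, h2⟩ := geometric_hahn_banach_point_closed (x := (a, r)) hcv hclosed
    (by simpa using h)
  have hL : ∀ x t, L (x, t) = L.comp (.inl ℝ E ℝ) x + L (0, 1) * t := by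
    intro x t
    have : (x, t) = (x, (0 : ℝ)) + t • ((0 : E), (1 : ℝ)) := by simp
    rw [this, map_add, map_smul]; simp [mul_comm]
  refine ⟨L.comp (.inl ℝ E ℝ), L (0, 1), u, ?_, by rw [← hL]; exact h1,
    fun x t hxt => by rw [← hL]; exact h2 (x, t) hxt⟩
  by_contra hneg
  push Not at hneg
  set l := L.comp (.inl ℝ E ℝ)
  set β := L (0, 1)
  obtain ⟨t0, ht0⟩ : ∃ t0 : ℝ, f x0 = t0 := ⟨_, (EReal.coe_toReal hx0 (hbot x0)).symm⟩
  set T := max t0 ((u - l x0) / β)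
  have h3 := h2 (x0, T) (by
    show f x0 ≤ _
    rw [ht0]; exact EReal.coe_le_coe_iff.2 (le_max_left _ _))
  rw [hL] at h3
  have h4 : (u - l x0) / β ≤ T := le_max_right _ _
  rw [div_le_iff_of_neg hneg] at h4
  change u < l x0 + β * T at h3
  linarith

lemma gamma0_affMin_of_pos {f : E → EReal} [CompleteSpace E] (hbot : ∀ x, f x ≠ ⊥) {a : E} {r : ℝ}
    (l : E →L[ℝ] ℝ) (β u : ℝ) (hβ : 0 < β) (h1 : l a + β * r < u)
    (h2 : ∀ (x : E) (t : ℝ), f x ≤ t → u < l x + β * t) :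
    ∃ w c, AffMin f w c ∧ r < inner ℝ a w + c := by
  have hi : ∀ x, inner ℝ x ((-β⁻¹) • (InnerProductSpace.toDual ℝ E).symm l) = -β⁻¹ * l x := by
    intro x
    rw [inner_smul_right, real_inner_comm, InnerProductSpace.toDual_symm_apply]
  refine ⟨(-β⁻¹) • (InnerProductSpace.toDual ℝ E).symm l, β⁻¹ * u, ?_, ?_⟩
  · intro x
    rw [hi]
    induction hfx : f x with
    | bot => exact absurd hfx (hbot x)
    | top => simp
    | coe t =>
      have := h2 x t hfx.le
      refine EReal.coe_le_coe_iff.2 ?_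
      have e : -β⁻¹ * l x + β⁻¹ * u = β⁻¹ * (u - l x) := by ring
      rw [e, inv_mul_le_iff₀ hβ]; linarith
  · rw [hi]
    have e : -β⁻¹ * l a + β⁻¹ * u = β⁻¹ * (u - l a) := by ring
    rw [e, lt_inv_mul_iff₀ hβ]; linarith

lemma gamma0_exists_affMin {f : E → EReal} [CompleteSpace E] (hf : IsGamma0 f) :
    ∃ w c, AffMin f w c := by
  obtain ⟨x0, hx0⟩ := hf.1
  have hbot := hf.2.1
  obtain ⟨t0, ht0⟩ : ∃ t0 : ℝ, f x0 = t0 := ⟨_, (EReal.coe_toReal hx0 (hbot x0)).symm⟩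
  obtain ⟨l, β, u, hβ, h1, h2⟩ := gamma0_sep hf (a := x0) (r := t0 - 1)
    (by rw [ht0]; exact EReal.coe_lt_coe_iff.2 (by linarith))
  have h3 := h2 x0 t0 ht0.le
  obtain ⟨w, c, h, -⟩ := gamma0_affMin_of_pos hbot l β u (by linarith) h1 h2
  exact ⟨w, c, h⟩

/-- Tilting an affine minorant by a functional negative on the domain. -/
lemma AffMin.tilt {f : E → EReal} [CompleteSpace E] {w0 : E} {c0 : ℝ} (h0 : AffMin f w0 c0)
    (l : E →L[ℝ] ℝ) (u : ℝ) (hl : ∀ x, f x ≠ ⊤ → u ≤ l x) {a : E} (ha : l a < u) (r : ℝ) :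
    ∃ w c, AffMin f w c ∧ r < inner ℝ a w + c := by
  obtain ⟨n, hn⟩ := exists_nat_gt ((r - (inner ℝ a w0 + c0)) / (u - l a))
  rw [div_lt_iff₀ (by linarith)] at hn
  have hi : ∀ x, inner ℝ x (w0 - (n : ℝ) • (InnerProductSpace.toDual ℝ E).symm l) =
      inner ℝ x w0 - n * l x := by
    intro x
    rw [inner_sub_right, inner_smul_right,
      real_inner_comm ((InnerProductSpace.toDual ℝ E).symm l) x,
      InnerProductSpace.toDual_symm_apply]
  refine ⟨w0 - (n : ℝ) • (InnerProductSpace.toDual ℝ E).symm l, c0 + n * u, ?_, ?_⟩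
  · intro x
    rw [hi]
    by_cases hx : f x = ⊤
    · simp [hx]
    · refine le_trans (EReal.coe_le_coe_iff.2 ?_) (h0 x)
      have := mul_le_mul_of_nonneg_left (hl x hx) (Nat.cast_nonneg (α := ℝ) n)
      linarith
  · rw [hi]; linarith

/-- Fenchel-Moreau: affine minorants exhaust `f`. -/
lemma gamma0_fm {f : E → EReal} [CompleteSpace E] (hf : IsGamma0 f) {a : E} {r : ℝ}
    (h : (r : EReal) < f a) : ∃ w c, AffMin f w c ∧ r < inner ℝ a w + c := by
  obtain ⟨l, β, u, hβ, h1, h2⟩ := gamma0_sep hf h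
  rcases hβ.lt_or_eq with hβ | hβ
  · exact gamma0_affMin_of_pos hf.2.1 l β u hβ h1 h2
  · subst hβ
    obtain ⟨w0, c0, h0⟩ := gamma0_exists_affMin hf
    refine h0.tilt l u (fun x hx => ?_) (by simpa using h1) r
    have := h2 x (f x).toReal (EReal.coe_toReal hx (hf.2.1 x)).ge
    simp at this
    exact this.le

end Helpers

section HelpersS

variable {G : Type*} [NormedAddCommGroup G] [InnerProductSpace ℝ G]

lemma sdom_iff {s : G → EReal} (hs : IsGamma0 (fun v : G => -(s v))) (v : G) :
    v ∈ sdom s ↔ 0 < s v := by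
  have := hs.2.1 v
  constructor
  · exact fun h => h.1
  · refine fun h => ⟨h, lt_top_iff_ne_top.2 fun h' => this ?_⟩
    simp [h']

lemma sdom_convex {s : G → EReal} (hs : IsGamma0 (fun v : G => -(s v))) :
    Convex ℝ (sdom s) := by
  intro u hu v hv a b ha hb hab
  have hcv := hs.2.2.2
  have hr : ∀ v ∈ sdom s, ∃ t : ℝ, 0 < t ∧ s v = t := by
    intro v hv
    have h1 : s v ≠ ⊤ := hv.2.ne
    have h2 : s v ≠ ⊥ := (lt_trans EReal.bot_lt_zero hv.1).ne'
    have e := EReal.coe_toReal h1 h2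
    refine ⟨(s v).toReal, ?_, e.symm⟩
    have := hv.1
    rw [← e] at this
    exact_mod_cast this
  obtain ⟨t, ht, hst⟩ := hr u hu
  obtain ⟨t', ht', hst'⟩ := hr v hv
  have := hcv (x := (u, -t)) (by simp [hst]) (y := (v, -t')) (by simp [hst']) ha hb hab
  rw [sdom_iff hs]
  have h3 : -(s (a • u + b • v)) ≤ ((a * (-t) + b * (-t') : ℝ) : EReal) := this
  have h4 : a * (-t) + b * (-t') < 0 := by
    rcases ha.lt_or_eq with ha | ha
    · nlinarith [mul_pos ha ht, mul_nonneg hb ht'.le]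
    · subst ha
      have : b = 1 := by linarith
      subst this; linarith
  have h5 : -(s (a • u + b • v)) < 0 := lt_of_le_of_lt h3 (by exact_mod_cast h4)
  have := EReal.neg_lt_comm.1 h5
  simpa using this

lemma pbas_eq_of_mem {s : G → EReal} {v : G} (hv : v ∈ sdom s) :
    pbas (fun v => -(s v)) v = -(s v) := by
  unfold pbas
  rw [if_pos]
  refine ⟨?_, ?_⟩
  · rw [EReal.lt_neg_comm]; simpa using hv.2
  · rw [EReal.neg_lt_comm]; simpa using hv.1

lemma pbas_eq_top {s : G → EReal} (hs : IsGamma0 (fun v : G => -(s v))) {v : G}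
    (hv : v ∉ sdom s) :
    pbas (fun v => -(s v)) v = ⊤ := by
  unfold pbas
  rw [if_neg]
  rintro ⟨-, h⟩
  rw [sdom_iff hs] at hv
  rw [EReal.neg_lt_comm] at h
  exact hv (by simpa using h)

lemma basEnv_nonpos {s : G → EReal} {v : G} (hv : v ∈ closure (sdom s)) :
    basEnv (fun v => -(s v)) v ≤ 0 := by
  unfold basEnv
  conv_lhs => unfold fconj
  refine iSup_le fun w => ?_
  by_contra hcon
  push Not at hcon
  have h1 : fconj (pbas fun v => -(s v)) w < ((inner ℝ w v : ℝ) : EReal) := by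
    by_contra h
    push Not at h
    have := EReal.sub_le_sub (le_refl ((inner ℝ w v : ℝ) : EReal)) h
    rw [← EReal.coe_sub, sub_self] at this
    exact absurd (hcon.trans_le this) (by simp)
  obtain ⟨r, hr, hr'⟩ := EReal.lt_iff_exists_real_btwn.1 h1
  have hr' := EReal.coe_lt_coe_iff.1 hr'
  have hA : AffMin (pbas fun v => -(s v)) w (-r) := AffMin.of_fconj_le (by simpa using hr.le)
  have hcl : closure (sdom s) ⊆ {x | inner ℝ x w - r ≤ 0} := by
    refine closure_minimal (fun x hx => ?_) (isClosed_le (by fun_prop) continuous_const)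
    have h2 := hA x
    rw [pbas_eq_of_mem hx] at h2
    have h3 : -(s x) ≤ 0 := by
      rw [EReal.neg_le]; simpa using hx.1.le
    have := h2.trans h3
    have : inner ℝ x w + -r ≤ 0 := by exact_mod_cast this
    show inner ℝ x w - r ≤ 0
    linarith
  have h4 : inner ℝ v w - r ≤ 0 := hcl hv
  rw [real_inner_comm] at h4
  linarith

lemma basEnv_ge [CompleteSpace G] {s : G → EReal} (hs : IsGamma0 (fun v : G => -(s v))) (v : G) :
    -(s v) ≤ basEnv (fun v => -(s v)) v := by
  refine EReal.ge_of_forall_gt_iff_ge.1 fun r hr => ?_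
  obtain ⟨w, c, h, h'⟩ := gamma0_fm hs hr
  exact (EReal.coe_le_coe_iff.2 h'.le).trans
    (AffMin.le_biconj (h.mono (le_pbas _)) v)

lemma basEnv_top [CompleteSpace G] {s : G → EReal} (hs : IsGamma0 (fun v : G => -(s v))) {v : G}
    (hv : v ∉ closure (sdom s)) : basEnv (fun v => -(s v)) v = ⊤ := by
  obtain ⟨w0, c0, h0⟩ := gamma0_exists_affMin hs
  obtain ⟨l, u, h1, h2⟩ := geometric_hahn_banach_point_closed (sdom_convex hs).closure
    isClosed_closure hv
  rw [EReal.eq_top_iff_forall_lt]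
  intro r
  obtain ⟨w, c, h, h'⟩ := (h0.mono (le_pbas _)).tilt l u (fun x hx => by
    by_cases hxs : x ∈ sdom s
    · exact (h2 x (subset_closure hxs)).le
    · exact absurd (pbas_eq_top hs hxs) hx) h1 r
  exact (EReal.coe_lt_coe_iff.2 h').trans_le (AffMin.le_biconj h v)

lemma edom_basEnv [CompleteSpace G] {s : G → EReal} (hs : IsGamma0 (fun v : G => -(s v))) :
    edom (basEnv (fun v => -(s v))) = closure (sdom s) := by
  ext v
  constructor
  · intro hv
    by_contra h
    exact (ne_of_lt hv) (basEnv_top hs h)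
  · intro hv
    exact lt_of_le_of_lt (basEnv_nonpos hv) (by simp)

end HelpersS

section HelpersP

variable {H G : Type*} [NormedAddCommGroup H] [InnerProductSpace ℝ H]
  [NormedAddCommGroup G] [InnerProductSpace ℝ G]

/-- Upper bound for any lower semicontinuous minorant of the preperspective. -/
lemma lsc_minorant_le [CompleteSpace H] {φ : H → EReal} {s : G → EReal} (hφ : IsGamma0 φ)
    (hs : IsGamma0 (fun v : G => -(s v))) {z p : H} {q : G}
    (hz : ∀ w ∈ edom (fconj φ), inner ℝ z w ≤ inner ℝ z p)
    (hq : q ∈ closure (sdom s)) (hsq : s q = 0)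
    (g : WithLp 2 (H × G) → EReal) (hg : LowerSemicontinuous g)
    (hle : ∀ r, g r ≤ prePersp φ s r) :
    g (pairHG z q) ≤ ((inner ℝ z p : ℝ) : EReal) := by
  obtain ⟨a, ha⟩ := hφ.1
  obtain ⟨α, hα⟩ : ∃ t0 : ℝ, φ a = t0 := ⟨_, (EReal.coe_toReal ha (hφ.2.1 a)).symm⟩
  have hrec : ∀ t : ℝ, 0 ≤ t → φ (a + t • z) ≤ ((α + t * inner ℝ z p : ℝ) : EReal) := by
    intro t ht
    by_contra hcon
    push Not at hcon
    obtain ⟨w, c, hw, hw'⟩ := gamma0_fm hφ hcon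
    have h1 := hz w (lt_of_le_of_lt hw.fconj_le (EReal.coe_lt_top _))
    have h2 := hw a
    rw [hα] at h2
    have h2 := EReal.coe_le_coe_iff.1 h2
    rw [inner_add_left, real_inner_smul_left] at hw'
    nlinarith [mul_le_mul_of_nonneg_left h1 ht]
  have hS : ∀ v ∈ sdom s, g (pairHG ((s v).toReal • a + z) v) ≤
      (((s v).toReal * α + inner ℝ z p : ℝ) : EReal) := by
    intro v hv
    have e := EReal.coe_toReal hv.2.ne (lt_trans EReal.bot_lt_zero hv.1).ne'
    have hpos : 0 < (s v).toReal := by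
      have := hv.1
      rw [← e] at this
      exact_mod_cast this
    refine (hle _).trans ?_
    have e2 : prePersp φ s (pairHG ((s v).toReal • a + z) v) =
        s v * φ ((s v).toReal⁻¹ • ((s v).toReal • a + z)) := if_pos hv
    rw [e2, smul_add, smul_smul, inv_mul_cancel₀ hpos.ne', one_smul]
    have h3 := hrec (s v).toReal⁻¹ (by positivity)
    have h4 : ((s v).toReal : EReal) * φ (a + (s v).toReal⁻¹ • z) ≤
        ((s v).toReal : EReal) * ((α + (s v).toReal⁻¹ * inner ℝ z p : ℝ) : EReal) :=
      mul_le_mul_of_nonneg_left h3 (by exact_mod_cast hpos.le)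
    rw [e] at h4
    refine h4.trans (le_of_eq ?_)
    nth_rewrite 1 [← e]
    rw [← EReal.coe_mul]
    congr 1
    field_simp
  haveI : (nhdsWithin q (sdom s)).NeBot := mem_closure_iff_nhdsWithin_neBot.1 hq
  have hst : Filter.Tendsto (fun v => (s v).toReal) (nhdsWithin q (sdom s)) (nhds 0) := by
    rw [tendsto_order]
    constructor
    · intro b hb
      filter_upwards [self_mem_nhdsWithin] with v hv
      exact hb.trans_le (EReal.toReal_nonneg hv.1.le)
    · intro b hb
      have hl := hs.2.2.1 q ((-b : ℝ) : EReal) (by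
        show _ < -(s q)
        rw [hsq, neg_zero]; exact_mod_cast (by linarith : -b < 0))
      filter_upwards [self_mem_nhdsWithin, mem_nhdsWithin_of_mem_nhds hl] with v hv hv2
      have e := EReal.coe_toReal hv.2.ne (lt_trans EReal.bot_lt_zero hv.1).ne'
      change ((-b : ℝ) : EReal) < -(s v) at hv2
      rw [← e, ← EReal.coe_neg, EReal.coe_lt_coe_iff] at hv2
      linarith
  have hpt : Filter.Tendsto (fun v => pairHG ((s v).toReal • a + z) v)
      (nhdsWithin q (sdom s)) (nhds (pairHG z q)) := by
    have h1 : Filter.Tendsto (fun v => ((s v).toReal • a + z, v))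
      (nhdsWithin q (sdom s)) (nhds (z, q)) := by
      refine Filter.Tendsto.prodMk_nhds ?_ (Filter.tendsto_id.mono_left nhdsWithin_le_nhds)
      have := (hst.smul_const a).add_const z
      simpa using this
    exact ((WithLp.prod_continuous_toLp 2 H G).tendsto (z, q)).comp h1
  by_contra hcon
  push Not at hcon
  obtain ⟨r, hr, hr'⟩ := EReal.lt_iff_exists_real_btwn.1 hcon
  have hr := EReal.coe_lt_coe_iff.1 hr
  have h5 := hpt.eventually (hg (pairHG z q) r hr')
  have h6 : Filter.Tendsto (fun v => (s v).toReal * α + inner ℝ z p)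
      (nhdsWithin q (sdom s)) (nhds (inner ℝ z p)) := by
    simpa using (hst.mul_const α).add_const (inner ℝ z p)
  have h7 := h6.eventually (gt_mem_nhds hr)
  obtain ⟨v, hv, hv1, hv2⟩ := ((show ∀ᶠ v in nhdsWithin q (sdom s), v ∈ sdom s from
    self_mem_nhdsWithin).and (h5.and h7)).exists
  have := hv1.trans_le (hS v hv)
  have := EReal.coe_lt_coe_iff.1 this
  linarith

lemma persp_ge {φ : H → EReal} {s : G → EReal} (hφ : IsGamma0 φ) {p : H} {q d : G}
    (hp : fconj φ p = 0) (hd : ∀ v ∈ sdom s, inner ℝ d (v - q) ≤ 0)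
    (r : WithLp 2 (H × G)) :
    ((inner ℝ r.fst p + inner ℝ d (r.snd - q) : ℝ) : EReal) ≤ persp φ s r := by
  unfold persp
  refine le_sSup ⟨fun r => ((inner ℝ r.fst p + inner ℝ d (r.snd - q) : ℝ) : EReal),
    ?_, ?_, ?_, rfl⟩
  · refine Continuous.lowerSemicontinuous (continuous_coe_real_ereal.comp ?_)
    have : Continuous fun r : WithLp 2 (H × G) => WithLp.ofLp r := WithLp.prod_continuous_ofLp 2 H G
    have h1 : Continuous fun r : WithLp 2 (H × G) => r.fst := continuous_fst.comp this
    have h2 : Continuous fun r : WithLp 2 (H × G) => r.snd := continuous_snd.comp this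
    fun_prop
  · rintro ⟨r1, t1⟩ h1 ⟨r2, t2⟩ h2 a b ha hb hab
    have h1 := EReal.coe_le_coe_iff.1 h1
    have h2 := EReal.coe_le_coe_iff.1 h2
    refine EReal.coe_le_coe_iff.2 ?_
    simp only [Prod.smul_mk, Prod.mk_add_mk, WithLp.add_fst, WithLp.add_snd, WithLp.smul_fst,
      WithLp.smul_snd, smul_eq_mul, inner_add_left, inner_sub_right, inner_add_right,
      real_inner_smul_left, real_inner_smul_right] at h1 h2 ⊢
    have e1 := mul_le_mul_of_nonneg_left h1 ha
    have e2 := mul_le_mul_of_nonneg_left h2 hb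
    have : a * inner ℝ d q + b * inner ℝ d q = inner ℝ d q := by rw [← add_mul, hab, one_mul]
    nlinarith
  · intro r
    by_cases hv : r.snd ∈ sdom s
    · have e2 : prePersp φ s r = s r.snd * φ ((s r.snd).toReal⁻¹ • r.fst) := if_pos hv
      rw [e2]
      have e := EReal.coe_toReal hv.2.ne (lt_trans EReal.bot_lt_zero hv.1).ne'
      have hpos : 0 < (s r.snd).toReal := by
        have := hv.1
        rw [← e] at this
        exact_mod_cast this
      have hA : AffMin φ p 0 := AffMin.of_fconj_le (by simp [hp])
      have h1 := hA ((s r.snd).toReal⁻¹ • r.fst)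
      have h4 : ((s r.snd).toReal : EReal) * _ ≤ ((s r.snd).toReal : EReal) * _ :=
        mul_le_mul_of_nonneg_left h1 (by exact_mod_cast hpos.le)
      rw [← EReal.coe_mul, e] at h4
      refine le_trans (EReal.coe_le_coe_iff.2 ?_) h4
      rw [real_inner_smul_left, add_zero, mul_inv_cancel_left₀ hpos.ne']
      have := hd _ hv
      linarith
    · have e2 : prePersp φ s r = ⊤ := if_neg hv
      rw [e2]; exact le_top

end HelpersP

/-- Proposition 4.2(i). -/
theorem stmt11 {H G : Type*} [NormedAddCommGroup H] [InnerProductSpace ℝ H] [CompleteSpace H]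
    [NormedAddCommGroup G] [InnerProductSpace ℝ G] [CompleteSpace G]
    (φ : H → EReal) (s : G → EReal) (hφ : IsGamma0 φ)
    (hc1 : ∀ u : H, 0 ≤ fconj φ u)
    (hc2 : ∃ u : H, 0 < fconj φ u ∧ fconj φ u < ⊤)
    (hs : IsGamma0 (fun v : G => -(s v)))
    (hS : ∃ v : G, 0 < s v ∧ s v < ⊤)
    (γ : ℝ) (hγ : 0 < γ) (x : H) (y : G) (hmem : (x, y) ∈ Omega1 φ s γ) :
    eta7eq φ s γ x y 0 ∧ (∀ η : ℝ, 0 ≤ η → eta7eq φ s γ x y η → η = 0) ∧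
    prox (smulE γ (persp φ s)) (pairHG x y) =
      pairHG (x - γ • projC (closure (edom (fconj φ))) (γ⁻¹ • x))
        (projC (closure (sdom s)) y) := by
  obtain ⟨h1, h2⟩ := hmem
  change fconj φ (projC (closure (edom (fconj φ))) (γ⁻¹ • x)) = 0 at h1
  change s (projC (closure (sdom s)) y) = 0 at h2
  obtain ⟨u0, -, hu0⟩ := hc2
  obtain ⟨hpD, hpv⟩ := projC_spec (C := closure (edom (fconj φ)))
    ⟨u0, subset_closure hu0⟩ isClosed_closure (edom_fconj_convex φ).closure (γ⁻¹ • x)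
  obtain ⟨v0, hv0⟩ := hS
  obtain ⟨hqS, hqv⟩ := projC_spec (C := closure (sdom s))
    ⟨v0, subset_closure hv0⟩ isClosed_closure (sdom_convex hs).closure y
  set p := projC (closure (edom (fconj φ))) (γ⁻¹ • x)
  set q := projC (closure (sdom s)) y
  have hproxp : ∀ η : ℝ, 0 ≤ η → prox (rscale (η / γ) (fconj φ)) (γ⁻¹ • x) = p := by
    intro η hη
    refine prox_eq_of_subgrad _ _ _ 0 ?_ ?_
    · unfold rscale
      split_ifs
      · simp only [if_pos hpD]; rfl
      · simp [h1]
    · intro u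
      unfold rscale
      split_ifs with h0
      · by_cases hu : u ∈ closure (edom (fconj φ))
        · simp only [if_pos hu]
          have := hpv u hu
          exact_mod_cast (by linarith : 0 + inner ℝ (γ⁻¹ • x - p) (u - p) ≤ 0)
        · simp only [if_neg hu]; exact le_top
      · by_cases hu : u ∈ edom (fconj φ)
        · have := hpv u (subset_closure hu)
          refine le_trans (b := (0 : EReal))
            (by exact_mod_cast (by linarith : 0 + inner ℝ (γ⁻¹ • x - p) (u - p) ≤ 0)) ?_
          exact mul_nonneg (by exact_mod_cast (by positivity : 0 ≤ η / γ)) (hc1 u)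
        · have hut : fconj φ u = ⊤ := by
            by_contra h
            exact hu (lt_top_iff_ne_top.2 h)
          have hpos : 0 < η / γ := lt_of_le_of_ne (by positivity) (Ne.symm h0)
          show _ ≤ ((η / γ : ℝ) : EReal) * fconj φ u
          rw [hut, EReal.coe_mul_top_of_pos hpos]; exact le_top
  have hproxq : prox (rscale 0 (basEnv fun v => -(s v))) y = q := by
    refine prox_eq_of_subgrad _ _ _ 0 ?_ ?_
    · simp only [rscale, if_true, edom_basEnv hs, closure_closure, if_pos hqS]; rfl
    · intro u
      simp only [rscale, if_true, edom_basEnv hs, closure_closure]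
      split_ifs with hu
      · have := hqv u hu
        exact_mod_cast (by linarith : 0 + inner ℝ (y - q) (u - q) ≤ 0)
      · exact le_top
  have hbq : basEnv (fun v => -(s v)) q = 0 := by
    refine le_antisymm (basEnv_nonpos hqS) ?_
    have := basEnv_ge hs q
    simpa [h2] using this
  have heta : ∀ η : ℝ, 0 ≤ η → (eta7eq φ s γ x y η ↔ η = 0) := by
    intro η hη
    unfold eta7eq
    rw [hproxp η hη, h1, EReal.toReal_zero, mul_zero, hproxq, hbq, zero_add]
    exact EReal.coe_eq_zero
  refine ⟨(heta 0 le_rfl).2 rfl, fun η hη h => (heta η hη).1 h, ?_⟩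
  set z := x - γ • p with hzdef
  have hxz : x - z = γ • p := by rw [hzdef]; abel
  have hz : ∀ w ∈ edom (fconj φ), inner ℝ z w ≤ inner ℝ z p := by
    intro w hw
    have h3 := hpv w (subset_closure hw)
    have h4 : z = γ • (γ⁻¹ • x - p) := by
      rw [hzdef, smul_sub, smul_smul, mul_inv_cancel₀ hγ.ne', one_smul]
    have h5 : inner ℝ z (w - p) ≤ 0 := by
      rw [h4, real_inner_smul_left]
      exact mul_nonpos_of_nonneg_of_nonpos hγ.le h3
    rw [inner_sub_right] at h5
    linarith
  have hge := persp_ge (s := s) (q := q) (d := γ⁻¹ • (y - q)) hφ h1 (fun v hv => by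
    rw [real_inner_smul_left]
    exact mul_nonpos_of_nonneg_of_nonpos (by positivity) (hqv v (subset_closure hv)))
  have hval : persp φ s (pairHG z q) = ((inner ℝ z p : ℝ) : EReal) := by
    refine le_antisymm ?_ ?_
    · refine sSup_le ?_
      rintro _ ⟨g, hg, -, hle, rfl⟩
      exact lsc_minorant_le hφ hs hz hqS h2 g hg hle
    · have := hge (pairHG z q)
      simpa [pairHG] using this
  refine prox_eq_of_subgrad _ _ _ (γ * inner ℝ z p) ?_ ?_
  · simp only [smulE]
    rw [hval, EReal.coe_mul]
  · intro r
    have h6 : (γ : EReal) * _ ≤ (γ : EReal) * _ :=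
      mul_le_mul_of_nonneg_left (hge r) (by exact_mod_cast hγ.le)
    refine le_trans (le_of_eq ?_) h6
    rw [← EReal.coe_mul]
    congr 1
    have e1 : inner ℝ (pairHG x y - pairHG z q) (r - pairHG z q) =
        inner ℝ (x - z) (r.fst - z) + inner ℝ (y - q) (r.snd - q) := rfl
    rw [e1, hxz, real_inner_smul_left, real_inner_smul_left, inner_sub_right,
      real_inner_comm p r.fst, real_inner_comm p z]
    field_simp
    ring
end
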